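/- Let (W,S) be a Coxeter system of finite rank and let N(W) be the normal closure in W of the union of the subgroups N(⟨B⟩) over all bases B of (W,S) of rank greater than 2. Then: (i) the pair (W^(2), S^(2)) = (W/N(W), η(S)) is a Coxeter system, where η: W → W/N(W) is the quotient homomorphism; and (ii) for any other set of Coxeter generators S' of W, the subgroup N(W) defined with respect to (W,S') equals the subgroup N(W) defined with respect to (W,S); consequently N(W) is a characteristic subgroup of W. -/

import Mathlib

/-!
The theorem is proved by describing `N(W)` without reference to Coxeter generators. Call an element
`x` of a subgroup `F` of `W` killed if every homomorphism from `F` to a generalized dihedral group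
sends it to `1`. (A generalized dihedral group is either abelian, or an abelian group extended by
elements inverting it.) Let `dihRad W` be the normal closure of the killed elements of the finite
subgroups of `W`. By construction it is preserved by all automorphisms, so independence of the
generators and invariance under automorphisms both follow from `NW_eq_dihRad`: `N(W) = dihRad W`.

`N(W) ≤ dihRad W`. The Coxeter relations of a finite irreducible diagram of rank at least three
force the defining generators of `N(⟨B⟩)` to die in every generalized dihedral group
(`inRad_of_genSetNB`). In ranks three and four this is a computation with the individual diagrams;
in rank at least five all generators of `⟨B⟩` have commuting images, which is checked on connected
subdiagrams of rank four (`rank5_comm`).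

`dihRad W ≤ N(W)`. By Tits' theorem a finite subgroup `F` is conjugate into a finite visual subgroup
(`exists_conj_par`), and killed elements of `F` remain killed in any larger group. A killed element
of a finite visual subgroup is a product of killed elements of its irreducible factors
(`mem_NW_of_visual`). A factor of rank at most two is itself dihedral or cyclic, and contributes
nothing. For a factor `⟨B⟩` of larger rank, the quotient of `⟨B⟩` by `N(⟨B⟩)` is abelian or generated
by two involutions, or, in type `F₄`, generated by two commuting subgroups each of which is a
quotient of the symmetric group of degree three. None of these has a nontrivial killed element
(`mem_NBSubgroup`, `killed_F4`).

The full classification of finite Coxeter groups is not needed. A finite visual subgroup has a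
positive definite cosine matrix (`gram_pos`), and evaluating this form on null vectors of affine
diagrams leaves few connected diagrams of rank three and four. Both `exists_conj_par` and
`gram_pos` rest on the geometric representation and its root system.

The quotient is a Coxeter group because `N(W)` is the normal closure of powers `(st)^k` of products
of two generators (`NW_le_normalClosure`): adjoining such relations to the Coxeter presentation only
lowers the exponents, so the orders of the products of the images of the generators form a Coxeter
matrix presenting the quotient (`isCoxeterSystemOn_quotient`).
-/

variable {W : Type*} [Group W]

/-- `S` is a set of Coxeter generators of the group `W`, with Coxeter matrix given by the
restriction of `m` to `S × S` (the value `0` of `m` encodes `∞`). -/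
def IsCoxeterSystemOn (m : W → W → ℕ) (S : Set W) : Prop :=
  ∃ (cm : CoxeterMatrix S) (cs : CoxeterSystem cm W),
    (∀ s : S, cs.simple s = (s : W)) ∧ ∀ s t : S, cm.M s t = m s t

/-- The subset `B` is irreducible: its Coxeter diagram (edges between distinct `x, y` with
`m x y > 2`, including `m x y = ∞`, i.e. `m x y = 0`) is nonempty and connected. -/
def IsIrreducibleOn (m : W → W → ℕ) (B : Set W) : Prop :=
  B.Nonempty ∧ ∀ u ∈ B, ∀ v ∈ B,
    Relation.ReflTransGen
      (fun x y => x ∈ B ∧ y ∈ B ∧ x ≠ y ∧ (m x y = 0 ∨ 2 < m x y)) u v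

/-- `B` is a base of the Coxeter system `(W, S)`: the visual subgroup `⟨B⟩` is a noncyclic,
maximal, finite, irreducible visual subgroup. -/
def IsBase (m : W → W → ℕ) (S B : Set W) : Prop :=
  B ⊆ S ∧ IsIrreducibleOn m B ∧ (Subgroup.closure B : Set W).Finite ∧
    ¬ IsCyclic ↥(Subgroup.closure B) ∧
    ∀ B' : Set W, B' ⊆ S → B ⊆ B' → IsIrreducibleOn m B' →
      (Subgroup.closure B' : Set W).Finite → B' = B

/-- The base `B` matches the base `B'`: the commutator subgroups of the visual subgroups
`⟨B⟩` and `⟨B'⟩` are conjugate in `W`. -/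
def Matches (B B' : Set W) : Prop :=
  ∃ w : W,
    Subgroup.map ((MulAut.conj w).toMonoidHom)
        (⁅Subgroup.closure B, Subgroup.closure B⁆ : Subgroup W)
      = ⁅Subgroup.closure B', Subgroup.closure B'⁆

/-- `(⟨B⟩, B)` has the isomorphism type of the Coxeter system of the Coxeter matrix `std`. -/
def HasType (m : W → W → ℕ) (B : Set W) {n : ℕ} (std : Fin n → Fin n → ℕ) : Prop :=
  ∃ e : ↥B ≃ Fin n, ∀ u v : ↥B, m u v = std (e u) (e v)

/-- The Coxeter matrix of type `Aₙ` (Coxeter's notation): linear diagram, all labels 3. -/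
def aMat (n : ℕ) : Fin n → Fin n → ℕ := fun i j =>
  if i = j then 1 else if i.val + 1 = j.val ∨ j.val + 1 = i.val then 3 else 2

/-- The Coxeter matrix of type `Cₙ` in Coxeter's notation (Bourbaki's `Bₙ`):
linear diagram with labels 3, …, 3, 4. -/
def cMat (n : ℕ) : Fin n → Fin n → ℕ := fun i j =>
  if i = j then 1
  else if i.val + 1 = j.val ∨ j.val + 1 = i.val then
    (if i.val + 1 = n ∨ j.val + 1 = n then 4 else 3)
  else 2

/-- The Coxeter matrix of type `Bₙ` in Coxeter's notation (Bourbaki's `Dₙ`), for `n ≥ 3`: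
a chain `0, …, n-2` with labels 3 together with the edge `{n-3, n-1}` labelled 3. -/
def bMat (n : ℕ) : Fin n → Fin n → ℕ := fun i j =>
  if i = j then 1
  else if ((i.val + 1 = j.val ∧ j.val + 2 ≤ n) ∨ (j.val + 1 = i.val ∧ i.val + 2 ≤ n))
      ∨ (i.val + 3 = n ∧ j.val + 1 = n) ∨ (j.val + 3 = n ∧ i.val + 1 = n) then 3
  else 2

/-- The dihedral Coxeter matrix `D₂(k)` (i.e. `I₂(k)`). -/
def d2Mat (k : ℕ) : Fin 2 → Fin 2 → ℕ := fun i j => if i = j then 1 else k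

/-- The Coxeter matrix of type `G₃` in Coxeter's notation (i.e. `H₃`). -/
def g3Mat : Fin 3 → Fin 3 → ℕ := ![![1,3,2], ![3,1,5], ![2,5,1]]

/-- The Coxeter matrix of type `G₄` in Coxeter's notation (i.e. `H₄`). -/
def g4Mat : Fin 4 → Fin 4 → ℕ := ![![1,3,2,2], ![3,1,3,2], ![2,3,1,5], ![2,2,5,1]]

/-- The Coxeter matrix of type `F₄`. -/
def f4Mat : Fin 4 → Fin 4 → ℕ := ![![1,3,2,2], ![3,1,4,2], ![2,4,1,3], ![2,2,3,1]]

/-- The 2-part of `k`: the largest power of 2 dividing `k` (with `0` encoding `∞`;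
the 2-part of `∞` is `∞`). -/
def twoPart (k : ℕ) : ℕ := if k = 0 then 0 else 2 ^ (k.factorization 2)

/-- The subgroup `N_b`: the normal closure in `W` of the elements `(st) ^ b(s,t)` for
`s, t ∈ S` with `m s t < ∞`, where `b(s,t)` is the 2-part of `m s t`. -/
def NbSubgroup (m : W → W → ℕ) (S : Set W) : Subgroup W :=
  Subgroup.normalClosure
    {x | ∃ s ∈ S, ∃ t ∈ S, m s t ≠ 0 ∧ x = (s * t) ^ twoPart (m s t)}

instance (m : W → W → ℕ) (S : Set W) : (NbSubgroup m S).Normal :=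
  Subgroup.normalClosure_normal

/-- `(a, b)` is a special pair of elements of `S`: `m a b ≡ 2 mod 4` and either `v = a` or
`v = b` has the property that `m s a = m s b = 2` for every `s ∈ S \ {a, b}` with
`m s v < ∞`. -/
def IsSpecialPair (m : W → W → ℕ) (S : Set W) (a b : W) : Prop :=
  a ∈ S ∧ b ∈ S ∧ a ≠ b ∧ m a b % 4 = 2 ∧
    ((∀ s ∈ S, s ≠ a → s ≠ b → m s a ≠ 0 → m s a = 2 ∧ m s b = 2) ∨
     (∀ s ∈ S, s ≠ a → s ≠ b → m s b ≠ 0 → m s a = 2 ∧ m s b = 2))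

open scoped Classical in
/-- `m̄ a b = 2` if `(a, b)` is a special pair and `m̄ a b = m a b` otherwise. -/
noncomputable def mbar (m : W → W → ℕ) (S : Set W) (a b : W) : ℕ :=
  if IsSpecialPair m S a b then 2 else m a b

/-- The subgroup `N_e`: the normal closure in `W` of the elements `st` with `m s t` odd
together with the elements `(ab)²` with `(a, b)` a special pair. -/
def NeSubgroup (m : W → W → ℕ) (S : Set W) : Subgroup W :=
  Subgroup.normalClosure
    ({x | ∃ s ∈ S, ∃ t ∈ S, Odd (m s t) ∧ x = s * t} ∪
     {x | ∃ a b : W, IsSpecialPair m S a b ∧ x = (a * b) ^ 2})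

instance (m : W → W → ℕ) (S : Set W) : (NeSubgroup m S).Normal :=
  Subgroup.normalClosure_normal

/-- The word length of `w` with respect to the generating set `B`. -/
noncomputable def wordLength (B : Set W) (w : W) : ℕ :=
  sInf {n | ∃ l : List W, (∀ x ∈ l, x ∈ B) ∧ l.length = n ∧ l.prod = w}

/-- `z` is a longest element of the visual subgroup `⟨B⟩`. -/
def IsLongestElement (B : Set W) (z : W) : Prop :=
  z ∈ Subgroup.closure B ∧
    ∀ w ∈ Subgroup.closure B, wordLength B w ≤ wordLength B z

/-- The basic subgroup `⟨B⟩` of `(W, S)` is reduced: for every set of Coxeter generators `S'`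
of `W`, any base of `(W, S')` matching `B` generates a subgroup of order at least `|⟨B⟩|`. -/
def IsReducedBase (m : W → W → ℕ) (S B : Set W) : Prop :=
  ∀ (S' : Set W) (m' : W → W → ℕ) (B' : Set W),
    IsCoxeterSystemOn m' S' → S'.Finite → IsBase m' S' B' → Matches B B' →
      Nat.card ↥(Subgroup.closure B) ≤ Nat.card ↥(Subgroup.closure B')

/-- The isomorphism type of `(⟨B⟩, B)` belongs to the family `F` of isomorphism types of
Coxeter systems (a family of Coxeter matrices). -/
def TypeIn (F : ∀ n : ℕ, (Fin n → Fin n → ℕ) → Prop) (m : W → W → ℕ) (B : Set W) : Prop :=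
  ∃ (n : ℕ) (Mt : Fin n → Fin n → ℕ), F n Mt ∧ HasType m B Mt

/-- The subgroup `N(F)`: the normal closure in `W` of the commutator subgroups of all
reduced basic subgroups of `(W, S)` of type in `F` together with the commutator subgroups of
all unreduced basic subgroups of `(W, S)` matching a reduced basic subgroup of type in `F`
of another system `(W, S')`. -/
def NFSubgroup (F : ∀ n : ℕ, (Fin n → Fin n → ℕ) → Prop)
    (m : W → W → ℕ) (S : Set W) : Subgroup W :=
  Subgroup.normalClosure
    {x | ∃ B : Set W, IsBase m S B ∧
      x ∈ (⁅Subgroup.closure B, Subgroup.closure B⁆ : Subgroup W) ∧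
      ((IsReducedBase m S B ∧ TypeIn F m B) ∨
       (¬ IsReducedBase m S B ∧ ∃ (S' : Set W) (m' : W → W → ℕ) (B' : Set W),
          IsCoxeterSystemOn m' S' ∧ S'.Finite ∧ IsBase m' S' B' ∧
          IsReducedBase m' S' B' ∧ TypeIn F m' B' ∧ Matches B B'))}

instance (F : ∀ n : ℕ, (Fin n → Fin n → ℕ) → Prop) (m : W → W → ℕ) (S : Set W) :
    (NFSubgroup F m S).Normal :=
  Subgroup.normalClosure_normal

/-- The normal closure, within the subgroup `H`, of the subset `X ⊆ H`,
as a subgroup of the ambient group. -/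
def nClosIn (H : Subgroup W) (X : Set W) : Subgroup W :=
  Subgroup.map H.subtype (Subgroup.normalClosure ((fun x : H => (x : W)) ⁻¹' X))

/-- The generating set for the subgroup `N(⟨B⟩)` of a basic subgroup `⟨B⟩` of rank at least 3:
the commutator subgroup of `⟨B⟩` if the rank is at least 5 or the type is `A₄`, `G₃` or `G₄`;
`a₁a₃` for type `A₃`; `b₁b₂, b₂b₃` (products of distinct commuting generators) for type `B₄`;
`(c₂c₃)²` for type `C₃`; `c₁c₃` for type `C₄`; and `(f₂f₃)²` for type `F₄`. -/
def genSetNB (m : W → W → ℕ) (B : Set W) : Set W :=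
  {x | ((5 ≤ B.ncard ∨ HasType m B (aMat 4) ∨ HasType m B g3Mat ∨ HasType m B g4Mat) ∧
          x ∈ (⁅Subgroup.closure B, Subgroup.closure B⁆ : Subgroup W)) ∨
       (HasType m B (aMat 3) ∧ ∃ u ∈ B, ∃ v ∈ B, u ≠ v ∧ m u v = 2 ∧ x = u * v) ∨
       (HasType m B (bMat 4) ∧ ∃ u ∈ B, ∃ v ∈ B, u ≠ v ∧ m u v = 2 ∧ x = u * v) ∨
       (HasType m B (cMat 3) ∧ ∃ u ∈ B, ∃ v ∈ B, m u v = 4 ∧ x = (u * v) ^ 2) ∨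
       (HasType m B (cMat 4) ∧ ∃ u ∈ B, ∃ p ∈ B, ∃ v ∈ B, ∃ q ∈ B,
          m u p = 3 ∧ m p v = 3 ∧ m v q = 4 ∧ m u v = 2 ∧ x = u * v) ∨
       (HasType m B f4Mat ∧ ∃ u ∈ B, ∃ v ∈ B, m u v = 4 ∧ x = (u * v) ^ 2)}

/-- The subgroup `N(⟨B⟩)` of the visual subgroup `⟨B⟩`, viewed as a subgroup of `W`. -/
def NBSubgroup (m : W → W → ℕ) (B : Set W) : Subgroup W :=
  nClosIn (Subgroup.closure B) (genSetNB m B)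

/-- The subgroup `N(W)`: the normal closure in `W` of the subgroups `N(⟨B⟩)` over all
bases `B` of `(W, S)` of rank greater than 2. -/
def NWSubgroup (m : W → W → ℕ) (S : Set W) : Subgroup W :=
  Subgroup.normalClosure
    {x | ∃ B : Set W, IsBase m S B ∧ 2 < B.ncard ∧ x ∈ NBSubgroup m B}

instance (m : W → W → ℕ) (S : Set W) : (NWSubgroup m S).Normal :=
  Subgroup.normalClosure_normal

set_option linter.unusedSectionVars false

/-! ### The geometric representation of a Coxeter group -/

namespace CoxRep

open Module

section Rep

variable {I : Type*} [Fintype I] [DecidableEq I] (M : CoxeterMatrix I)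

/-- The Gram matrix of the simple roots: `-cos (π / m)`.  For `m = ∞`, encoded by `0`, the
convention `π / 0 = 0` gives the usual value `-1`. -/
noncomputable def gram (i j : I) : ℝ := -Real.cos (Real.pi / M.M i j)

/-- The simple root attached to `i`, a standard basis vector of `I → ℝ`. -/
noncomputable def root (i : I) : I → ℝ := Pi.single i 1

/-- The simple coroot attached to `i`: twice the pairing with the simple root. -/
noncomputable def coroot (i : I) : Dual ℝ (I → ℝ) :=
  ∑ j, (2 * gram M i j) • LinearMap.proj j

lemma gram_self (i : I) : gram M i i = 1 := by simp [gram]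

lemma gram_symm (i j : I) : gram M i j = gram M j i := by
  simp only [gram, M.symmetric i j]

lemma coroot_apply (i : I) (v : I → ℝ) : coroot M i v = ∑ j, 2 * gram M i j * v j := by
  simp [coroot]

lemma coroot_root (i j : I) : coroot M i (root j) = 2 * gram M i j := by
  simp [coroot_apply, root, Pi.single_apply]

lemma coroot_root_self (i : I) : coroot M i (root i) = 2 := by
  simp [coroot_root, gram_self]

/-- The simple reflection `v ↦ v - 2 B(α_i, v) α_i`. -/
noncomputable def sigma (i : I) : (I → ℝ) ≃ₗ[ℝ] (I → ℝ) := reflection (coroot_root_self M i)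

lemma sigma_apply (i : I) (v : I → ℝ) : sigma M i v = v - coroot M i v • root i :=
  reflection_apply _ _

lemma sigma_sq (i : I) : sigma M i * sigma M i = 1 := by
  rw [mul_eq_one_iff_eq_inv]
  exact (reflection_inv (coroot_root_self M i)).symm

lemma sigma_braid (i j : I) : (sigma M i * sigma M j) ^ M.M i j = 1 := by
  rcases eq_or_ne i j with rfl | hij
  · simp [sigma_sq]
  rcases Nat.eq_zero_or_pos (M.M i j) with h0 | hpos
  · simp [h0]
  have h1 := M.off_diagonal i j hij
  rcases eq_or_ne (M.M i j) 2 with h2 | h2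
  · have hg : gram M i j = 0 := by simp [gram, h2]
    have hg' : gram M j i = 0 := by rw [gram_symm, hg]
    rw [h2]
    ext1 v
    simp only [pow_two, LinearEquiv.mul_apply, sigma_apply, map_sub, map_smul, coroot_root, hg,
      hg', gram_self, LinearEquiv.coe_one, id]
    module
  have h3 : 3 ≤ M.M i j := by omega
  set m := M.M i j with hm
  have hm0 : (0 : ℝ) < m := by exact_mod_cast hpos
  set φ : ℝ := 2 * (Real.pi / m) with hφ
  have hmφ : m * φ = 2 * Real.pi := by rw [hφ]; field_simp
  have hsin : Real.sin φ ≠ 0 := by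
    apply ne_of_gt
    apply Real.sin_pos_of_pos_of_lt_pi
    · positivity
    · have : (3 : ℝ) ≤ m := by exact_mod_cast h3
      have := Real.pi_pos
      nlinarith
  have ht : coroot M i (root j) * coroot M j (root i) - 2 = 2 * Real.cos φ := by
    rw [coroot_root, coroot_root, gram_symm M j i, gram, ← hm, hφ, Real.cos_two_mul]
    ring
  have hS (n : ℤ) := Polynomial.Chebyshev.S_two_mul_real_cos φ n
  have key := reflection_mul_reflection_pow_apply (coroot_root_self M i) (coroot_root_self M j) m
  ext1 v
  rw [sigma, sigma, key, ht]
  rcases Nat.even_or_odd' m with ⟨k, hk | hk⟩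
  · have e1 : ((m : ℤ) - 2) / 2 = k - 1 := by omega
    have e2 : ((m : ℤ) - 1) / 2 = k - 1 := by omega
    have hz : (Polynomial.Chebyshev.S ℝ (k - 1)).eval (2 * Real.cos φ) = 0 := by
      have := hS (k - 1)
      have e : (((k : ℤ) - 1 : ℤ) + 1 : ℝ) * φ = Real.pi := by
        have : (m : ℝ) = 2 * k := by exact_mod_cast hk
        push_cast; rw [this] at hmφ; linarith
      rw [e, Real.sin_pi] at this
      exact (mul_eq_zero.1 this).resolve_right hsin
    rw [e1, e2, hz]
    simp
  · have e0 : ((m : ℤ) - 2) / 2 = k - 1 := by omega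
    have e1 : ((m : ℤ) - 1) / 2 = k := by omega
    have e2 : ((m : ℤ) - 3) / 2 = k - 1 := by omega
    have e3 : (m : ℤ) / 2 = k := by omega
    have hz : (Polynomial.Chebyshev.S ℝ k).eval (2 * Real.cos φ) +
        (Polynomial.Chebyshev.S ℝ (k - 1)).eval (2 * Real.cos φ) = 0 := by
      have a := hS (k - 1)
      have b := hS k
      have e : ((k : ℤ) + 1 : ℝ) * φ = 2 * Real.pi - k * φ := by
        have : (m : ℝ) = 2 * k + 1 := by exact_mod_cast hk
        push_cast; rw [this] at hmφ; linarith
      rw [e, Real.sin_two_pi_sub] at b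
      have e' : (((k : ℤ) - 1 : ℤ) + 1 : ℝ) * φ = k * φ := by push_cast; ring
      rw [e'] at a
      refine (mul_eq_zero.1 (?_ : _ * Real.sin φ = 0)).resolve_right hsin
      rw [add_mul, a, b]; ring
    rw [e0, e1, e2, e3, hz]
    simp

variable {M} {W : Type*} [Group W] (cs : CoxeterSystem M W)

/-- The geometric representation of a Coxeter group on `I → ℝ`. -/
noncomputable def rep : W →* ((I → ℝ) ≃ₗ[ℝ] (I → ℝ)) := cs.lift ⟨sigma M, sigma_braid M⟩

lemma rep_simple (i : I) : rep cs (cs.simple i) = sigma M i := cs.lift_apply_simple _ i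

/-- The coordinates in the basis of simple roots are all nonnegative. -/
def Pos (v : I → ℝ) : Prop := ∀ i, 0 ≤ v i

/-- The sequence `sin (nθ) / sin θ`, where `c = cos θ`, defined by its recursion. -/
def cheb (c : ℝ) : ℕ → ℝ
  | 0 => 0
  | 1 => 1
  | n + 2 => 2 * c * cheb c (n + 1) - cheb c n

lemma cheb_sin (θ : ℝ) (n : ℕ) : cheb (Real.cos θ) n * Real.sin θ = Real.sin (n * θ) := by
  induction n using Nat.twoStepInduction with
  | zero => simp [cheb]
  | one => simp [cheb]
  | more n h1 h2 =>
    rw [cheb, sub_mul, mul_assoc, h1, h2]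
    have e1 : ((n + 2 : ℕ) : ℝ) * θ = ((n + 1 : ℕ) : ℝ) * θ + θ := by push_cast; ring
    have e2 : (n : ℝ) * θ = ((n + 1 : ℕ) : ℝ) * θ - θ := by push_cast; ring
    rw [e1, e2, Real.sin_add, Real.sin_sub]
    ring

lemma cheb_one (n : ℕ) : cheb 1 n = n := by
  induction n using Nat.twoStepInduction with
  | zero => simp [cheb]
  | one => simp [cheb]
  | more n h1 h2 => rw [cheb, h1, h2]; push_cast; ring

lemma cheb_nonneg (i j : I) (hij : i ≠ j) (n : ℕ) (hn : M.M i j = 0 ∨ n ≤ M.M i j) :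
    0 ≤ cheb (-gram M i j) n := by
  have h1 := M.off_diagonal i j hij
  simp only [gram, neg_neg]
  rcases Nat.eq_zero_or_pos (M.M i j) with h0 | hpos
  · simp [h0, cheb_one]
  have h2 : 2 ≤ M.M i j := by omega
  have hn : n ≤ M.M i j := by omega
  have hm0 : (0 : ℝ) < M.M i j := by exact_mod_cast hpos
  have h2' : (2 : ℝ) ≤ M.M i j := by exact_mod_cast h2
  have hn' : (n : ℝ) ≤ M.M i j := by exact_mod_cast hn
  have hpi := Real.pi_pos
  have hθ : 0 < Real.pi / M.M i j := by positivity
  have hθ2 : M.M i j * (Real.pi / M.M i j) = Real.pi := by field_simp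
  have hsin : 0 < Real.sin (Real.pi / M.M i j) :=
    Real.sin_pos_of_pos_of_lt_pi hθ (by nlinarith)
  have := cheb_sin (Real.pi / M.M i j) n
  have hs : 0 ≤ Real.sin (n * (Real.pi / M.M i j)) :=
    Real.sin_nonneg_of_nonneg_of_le_pi (by positivity) (by nlinarith)
  rw [← this] at hs
  exact nonneg_of_mul_nonneg_left hs hsin

/-- The action of an alternating word on a simple root, inside the plane of two simple roots. -/
lemma rep_alternating (i j : I) (n : ℕ) :
    rep cs (cs.wordProd (CoxeterSystem.alternatingWord i j n)) (root i) =
      if Even n then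
        cheb (-gram M i j) (n + 1) • root i + cheb (-gram M i j) n • root j
      else cheb (-gram M i j) n • root i + cheb (-gram M i j) (n + 1) • root j := by
  induction n with
  | zero => simp [CoxeterSystem.alternatingWord, cheb]
  | succ n ih =>
    rw [CoxeterSystem.alternatingWord_succ', cs.wordProd_cons, map_mul, LinearEquiv.mul_apply, ih]
    have hg := gram_symm M j i
    by_cases hn : Even n
    · have hn' : ¬ Even (n + 1) := by simpa [Nat.even_add_one] using hn
      simp only [hn, hn', if_true, if_false, rep_simple, sigma_apply, map_add, map_smul,
        coroot_root, hg, gram_self, cheb]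
      module
    · have hn' : Even (n + 1) := by simpa [Nat.even_add_one] using hn
      simp only [hn, hn', if_true, if_false, rep_simple, sigma_apply, map_add, map_smul,
        coroot_root, gram_self, cheb]
      module

lemma pos_root (i : I) : Pos (root i) := by
  intro j
  by_cases h : j = i
  · subst h; simp [root]
  · simp [root, h]

end Rep

end CoxRep

/-! ### Roots, lengths and inversion sets -/

namespace CoxRep

open Module

section Rep

variable {I : Type*} [Fintype I] [DecidableEq I] {M : CoxeterMatrix I}
  {W : Type*} [Group W] (cs : CoxeterSystem M W)

lemma Pos.add {u v : I → ℝ} (hu : Pos u) (hv : Pos v) : Pos (u + v) :=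
  fun i => add_nonneg (hu i) (hv i)

lemma Pos.smul {c : ℝ} {v : I → ℝ} (hc : 0 ≤ c) (hv : Pos v) : Pos (c • v) :=
  fun i => mul_nonneg hc (hv i)

/-- Stripping a maximal alternating word in `i`, `j` from the right end of `w`. -/
lemma exists_peel (w : W) (i j : I) (hj : cs.length (w * cs.simple j) < cs.length w) :
    ∃ (v : W) (n : ℕ), w = v * cs.wordProd (CoxeterSystem.alternatingWord i j n) ∧
      cs.length w = cs.length v + n ∧ 1 ≤ n ∧
      cs.length v < cs.length (v * cs.simple i) ∧ cs.length v < cs.length (v * cs.simple j) := by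
  classical
  let P : ℕ → Prop := fun n => ∃ v : W,
    w = v * cs.wordProd (CoxeterSystem.alternatingWord i j n) ∧ cs.length w = cs.length v + n
  have hP1 : P 1 := by
    refine ⟨w * cs.simple j, ?_, ?_⟩
    · simp [CoxeterSystem.alternatingWord, CoxeterSystem.wordProd]
    · have := cs.length_mul_simple w j
      omega
  have hb : ∀ n, P n → n ≤ cs.length w := by
    rintro n ⟨v, -, h⟩; omega
  have h1 : 1 ≤ cs.length w := hb 1 hP1
  obtain ⟨v, hv, hl⟩ := Nat.findGreatest_spec (P := P) h1 hP1
  have hmax : ¬ P (Nat.findGreatest P (cs.length w) + 1) := by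
    intro h
    have := Nat.le_findGreatest (hb _ h) h
    omega
  have hn1 : 1 ≤ Nat.findGreatest P (cs.length w) := Nat.le_findGreatest h1 hP1
  set n := Nat.findGreatest P (cs.length w) with hn
  have hx : cs.length v < cs.length (v * cs.simple (if Even n then j else i)) := by
    by_contra hcon
    apply hmax
    refine ⟨v * cs.simple (if Even n then j else i), ?_, ?_⟩
    · rw [CoxeterSystem.alternatingWord_succ', cs.wordProd_cons, ← mul_assoc,
        cs.simple_mul_simple_cancel_right]
      exact hv
    · have := cs.length_mul_simple v (if Even n then j else i)
      omega
  have hy : cs.length v < cs.length (v * cs.simple (if Even n then i else j)) := by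
    by_contra hcon
    obtain ⟨k, hk⟩ : ∃ k, n = k + 1 := ⟨n - 1, by omega⟩
    have he : (if Even n then i else j) = (if Even k then j else i) := by
      rw [hk]; by_cases hE : Even k <;> simp [hE, Nat.even_add_one]
    have hw : w = v * cs.simple (if Even n then i else j) *
        cs.wordProd (CoxeterSystem.alternatingWord i j k) := by
      rw [hv, hk, CoxeterSystem.alternatingWord_succ', cs.wordProd_cons, ← mul_assoc, ← hk, he]
    have h2 := cs.length_mul_le (v * cs.simple (if Even n then i else j))
      (cs.wordProd (CoxeterSystem.alternatingWord i j k))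
    have h3 := cs.length_wordProd_le (CoxeterSystem.alternatingWord i j k)
    rw [CoxeterSystem.length_alternatingWord] at h3
    rw [← hw] at h2
    have := cs.length_mul_simple v (if Even n then i else j)
    omega
  refine ⟨v, n, hv, hl, hn1, ?_, ?_⟩
  · by_cases hE : Even n
    · simpa [hE] using hy
    · simpa [hE] using hx
  · by_cases hE : Even n
    · simpa [hE] using hx
    · simpa [hE] using hy

/-- If right multiplication by a simple reflection increases the length of `w`, then `w` maps the
simple root to a positive root. -/
theorem pos_of_length (w : W) (i : I) (h : cs.length w < cs.length (w * cs.simple i)) :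
    Pos (rep cs w (root i)) := by
  induction hl : cs.length w using Nat.strong_induction_on generalizing w i with
  | _ l ih =>
    by_cases hw : w = 1
    · subst hw; simpa using pos_root i
    obtain ⟨j, hj⟩ := cs.exists_rightDescent_of_ne_one hw
    have hij : i ≠ j := by
      rintro rfl
      exact absurd hj (by rw [CoxeterSystem.IsRightDescent]; omega)
    obtain ⟨v, n, hv, hlen, hn, hi', hj'⟩ := exists_peel cs w i j hj
    have hnM : M.M i j = 0 ∨ n + 1 ≤ M.M i j := by
      by_contra hcon
      push Not at hcon
      have h1 : M.M j i ≠ 0 := by rw [M.symmetric]; exact hcon.1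
      have h2 : n + 1 > M.M j i := by rw [M.symmetric]; omega
      have h3 := cs.not_isReduced_alternatingWord j i h1 h2
      have h4 := cs.length_wordProd_le (CoxeterSystem.alternatingWord j i (n + 1))
      rw [CoxeterSystem.IsReduced] at h3
      rw [CoxeterSystem.length_alternatingWord] at h3 h4
      have h5 : w * cs.simple i =
          v * cs.wordProd (CoxeterSystem.alternatingWord j i (n + 1)) := by
        rw [CoxeterSystem.alternatingWord_succ, cs.wordProd_concat, ← mul_assoc, ← hv]
      have h6 := cs.length_mul_le v (cs.wordProd (CoxeterSystem.alternatingWord j i (n + 1)))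
      rw [← h5] at h6
      omega
    have hc1 := cheb_nonneg (M := M) i j hij (n + 1) hnM
    have hc0 := cheb_nonneg (M := M) i j hij n (hnM.imp id (by omega))
    have hpi := ih _ (by omega) v i hi' rfl
    have hpj := ih _ (by omega) v j hj' rfl
    rw [hv, map_mul, LinearEquiv.mul_apply, rep_alternating]
    split_ifs
    · rw [map_add, map_smul, map_smul]
      exact (hpi.smul hc1).add (hpj.smul hc0)
    · rw [map_add, map_smul, map_smul]
      exact (hpi.smul hc0).add (hpj.smul hc1)

/-- If right multiplication by a simple reflection decreases the length of `w`, then `w` maps the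
simple root to a negative root. -/
theorem neg_of_length (w : W) (i : I) (h : cs.length (w * cs.simple i) < cs.length w) :
    Pos (-(rep cs w (root i))) := by
  have := pos_of_length cs (w * cs.simple i) i (by simpa using h)
  rw [map_mul, LinearEquiv.mul_apply, rep_simple, sigma_apply, coroot_root_self] at this
  convert this using 1
  rw [map_sub, map_smul]
  module

/-- The roots: the orbit of the simple roots. -/
def IsRoot (v : I → ℝ) : Prop := ∃ (w : W) (i : I), v = rep cs w (root i)

lemma IsRoot.rep {v : I → ℝ} (h : IsRoot cs v) (w : W) : IsRoot cs (rep cs w v) := by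
  obtain ⟨u, i, rfl⟩ := h
  exact ⟨w * u, i, by rw [map_mul, LinearEquiv.mul_apply]⟩

lemma isRoot_root (i : I) : IsRoot cs (root i) := ⟨1, i, by simp⟩

lemma root_ne_zero (i : I) : root i ≠ (0 : I → ℝ) := by
  intro h
  have := congrFun h i
  simp [root] at this

lemma IsRoot.ne_zero {v : I → ℝ} (h : IsRoot cs v) : v ≠ 0 := by
  obtain ⟨w, i, rfl⟩ := h
  simpa using root_ne_zero i

lemma IsRoot.pos_or_neg {v : I → ℝ} (h : IsRoot cs v) : Pos v ∨ Pos (-v) := by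
  obtain ⟨w, i, rfl⟩ := h
  rcases cs.length_mul_simple w i with h | h
  · exact Or.inl (pos_of_length cs w i (by omega))
  · exact Or.inr (neg_of_length cs w i (by omega))

lemma not_pos_and_neg {v : I → ℝ} (h0 : v ≠ 0) (h1 : Pos v) (h2 : Pos (-v)) : False :=
  h0 (funext fun i => le_antisymm (by simpa using h2 i) (h1 i))

/-- The invariant symmetric bilinear form. -/
noncomputable def form (u v : I → ℝ) : ℝ := ∑ i, u i * coroot M i v

lemma form_eq (u v : I → ℝ) : form (M := M) u v = ∑ i, ∑ j, 2 * gram M i j * (u i * v j) := by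
  simp only [form, coroot_apply, Finset.mul_sum]
  refine Finset.sum_congr rfl fun i _ => Finset.sum_congr rfl fun j _ => by ring

lemma form_symm (u v : I → ℝ) : form (M := M) u v = form (M := M) v u := by
  rw [form_eq, form_eq, Finset.sum_comm]
  refine Finset.sum_congr rfl fun i _ => Finset.sum_congr rfl fun j _ => ?_
  rw [gram_symm]; ring

lemma form_sub_smul (u v r : I → ℝ) (c : ℝ) :
    form (M := M) (u - c • r) v = form (M := M) u v - c * form (M := M) r v := by
  simp only [form, Pi.sub_apply, Pi.smul_apply, smul_eq_mul, sub_mul, Finset.sum_sub_distrib,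
    Finset.mul_sum, mul_assoc]

lemma form_root (i : I) (v : I → ℝ) : form (M := M) (root i) v = coroot M i v := by
  simp [form, root, Pi.single_apply]

lemma form_sigma (i : I) (v : I → ℝ) :
    form (M := M) (sigma M i v) (sigma M i v) = form (M := M) v v := by
  rw [sigma_apply, form_sub_smul, form_symm v, form_sub_smul, form_root, form_root, map_sub,
    map_smul, coroot_root_self, smul_eq_mul]
  ring

lemma form_rep (w : W) (v : I → ℝ) :
    form (M := M) (rep cs w v) (rep cs w v) = form (M := M) v v := by
  induction w using cs.simple_induction_left with
  | one => simp
  | mul_simple_left w i ih =>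
    rw [map_mul, LinearEquiv.mul_apply, rep_simple, form_sigma, ih]

/-- A simple reflection permutes the positive roots other than its own simple root. -/
lemma eq_root_of_sigma_neg {v : I → ℝ} (h : IsRoot cs v) (hv : Pos v) (i : I)
    (hn : Pos (-(sigma M i v))) : v = root i := by
  have hj : ∀ j, j ≠ i → v j = 0 := by
    intro j hj
    have h1 := hn j
    have h2 := hv j
    simp [sigma_apply, root, hj] at h1
    linarith
  have hvi : v = v i • root i := by
    ext j
    by_cases h : j = i
    · subst h; simp [root]
    · simp [root, h, hj j h]
  have h1 : form (M := M) v v = 2 := by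
    obtain ⟨w, k, rfl⟩ := h
    rw [form_rep, form_root, coroot_root_self]
  have h2 : form (M := M) v v = v i * (v i * 2) := by
    have : form (M := M) v v = form (M := M) (0 - (-(v i)) • root i) (0 - (-(v i)) • root i) := by
      congr 1 <;> (conv_lhs => rw [hvi]) <;> module
    rw [this, form_sub_smul, form_symm (root i), form_sub_smul, form_root, coroot_root_self]
    simp [form]
  have h3 : v i = 1 := by
    have := hv i
    nlinarith
  rw [hvi, h3, one_smul]

/-- The inversion set of `w`: the positive roots made negative by `w`. -/
def Inv (w : W) : Set (I → ℝ) := {v | IsRoot cs v ∧ Pos v ∧ Pos (-(rep cs w v))}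

lemma inv_finite (w : W) : (Inv cs w).Finite := by
  induction w using cs.simple_induction_right with
  | one =>
    convert Set.finite_empty (α := I → ℝ)
    ext v
    simp only [Inv, Set.mem_ofPred_eq, map_one, LinearEquiv.coe_one, id, Set.mem_empty_iff_false,
      iff_false]
    rintro ⟨h1, h2, h3⟩
    exact not_pos_and_neg (h1.ne_zero cs) h2 h3
  | mul_simple_right w i ih =>
    refine ((Set.finite_singleton (root i)).union (ih.preimage
      ((sigma M i).injective.injOn))).subset ?_
    rintro v ⟨h1, h2, h3⟩
    rw [map_mul, LinearEquiv.mul_apply, rep_simple] at h3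
    have h4 : IsRoot cs (sigma M i v) := by rw [← rep_simple cs]; exact h1.rep cs _
    rcases h4.pos_or_neg with h5 | h5
    · exact Or.inr ⟨h4, h5, h3⟩
    · exact Or.inl (eq_root_of_sigma_neg cs h1 h2 i h5)

end Rep

end CoxRep

/-! ### Tits' theorem and positive definiteness of finite parabolic subgroups -/

namespace CoxRep

open Module

section Tits

variable {I : Type*} [Fintype I] [DecidableEq I] {M : CoxeterMatrix I}
  {W : Type*} [Group W] (cs : CoxeterSystem M W)

/-- The standard parabolic (visual) subgroup on a set `J` of indices. -/
def par (J : Set I) : Subgroup W := Subgroup.closure (cs.simple '' J)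

lemma simple_mem_par {J : Set I} {j : I} (hj : j ∈ J) : cs.simple j ∈ par cs J :=
  Subgroup.subset_closure ⟨j, hj, rfl⟩

lemma rep_apply_of_notMem {J : Set I} {w : W} (hw : w ∈ par cs J) :
    ∀ (v : I → ℝ) (k : I), k ∉ J → rep cs w v k = v k := by
  induction hw using Subgroup.closure_induction with
  | mem x hx =>
    obtain ⟨j, hj, rfl⟩ := hx
    intro v k hk
    have : k ≠ j := by rintro rfl; exact hk hj
    simp [rep_simple, sigma_apply, root, this]
  | one => simp
  | mul x y _ _ hx hy =>
    intro v k hk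
    rw [map_mul, LinearEquiv.mul_apply, hx _ k hk, hy _ k hk]
  | inv x _ hx =>
    intro v k hk
    have := hx (rep cs x⁻¹ v) k hk
    rw [← LinearEquiv.mul_apply, ← map_mul] at this
    simpa using this.symm

lemma mem_of_descent {J : Set I} {w : W} (hw : w ∈ par cs J) {j : I}
    (hj : cs.IsRightDescent w j) : j ∈ J := by
  by_contra h
  have h1 := neg_of_length cs w j hj j
  rw [Pi.neg_apply, rep_apply_of_notMem cs hw _ j h] at h1
  simp [root] at h1
  linarith

/-- An element of a parabolic subgroup which fixes all of its simple roots is trivial. -/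
lemma eq_one_of_fix {J : Set I} {w : W} (hw : w ∈ par cs J)
    (h : ∀ i ∈ J, rep cs w (root i) = root i) : w = 1 := by
  by_contra hne
  obtain ⟨j, hj⟩ := cs.exists_rightDescent_of_ne_one hne
  have h1 := neg_of_length cs w j hj
  rw [h j (mem_of_descent cs hw hj)] at h1
  exact not_pos_and_neg (root_ne_zero j) (pos_root j) h1

/-- Parabolic subgroups on disjoint sets of generators intersect trivially. -/
lemma par_inter {J K : Set I} (hJK : Disjoint J K) {w : W} (hJ : w ∈ par cs J)
    (hK : w ∈ par cs K) : w = 1 := by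
  by_contra hne
  obtain ⟨j, hj⟩ := cs.exists_rightDescent_of_ne_one hne
  exact Set.disjoint_left.1 hJK (mem_of_descent cs hJ hj) (mem_of_descent cs hK hj)

lemma IsRoot.neg {v : I → ℝ} (h : IsRoot cs v) : IsRoot cs (-v) := by
  obtain ⟨w, i, rfl⟩ := h
  refine ⟨w * cs.simple i, i, ?_⟩
  rw [map_mul, LinearEquiv.mul_apply, rep_simple, sigma_apply, coroot_root_self, map_sub,
    map_smul]
  module

/-- A functional that is negative on only finitely many positive roots can be moved into the
closed fundamental chamber. -/
lemma exists_dominant (y : Dual ℝ (I → ℝ))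
    (hy : {v | IsRoot cs v ∧ Pos v ∧ y v < 0}.Finite) :
    ∃ w : W, ∀ i, 0 ≤ y (rep cs w (root i)) := by
  induction hn : {v | IsRoot cs v ∧ Pos v ∧ y v < 0}.ncard using Nat.strong_induction_on
    generalizing y with
  | _ n ih =>
    by_cases hall : ∀ i, 0 ≤ y (root i)
    · exact ⟨1, by simpa using hall⟩
    push Not at hall
    obtain ⟨i, hi⟩ := hall
    let y' : Dual ℝ (I → ℝ) := y ∘ₗ (sigma M i).toLinearMap
    have hmaps : ∀ v ∈ {v | IsRoot cs v ∧ Pos v ∧ y' v < 0},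
        sigma M i v ∈ {v | IsRoot cs v ∧ Pos v ∧ y v < 0} \ {root i} := by
      rintro v ⟨h1, h2, h3⟩
      have h4 : IsRoot cs (sigma M i v) := by rw [← rep_simple cs]; exact h1.rep cs _
      have hr : sigma M i (root i) = -root i := by
        rw [sigma_apply, coroot_root_self]; module
      refine ⟨⟨h4, ?_, h3⟩, ?_⟩
      · rcases h4.pos_or_neg with h5 | h5
        · exact h5
        · have := eq_root_of_sigma_neg cs h1 h2 i h5
          rw [this] at h3
          simp [y', hr] at h3
          linarith
      · intro h5
        have h6 : v = sigma M i (sigma M i v) := by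
          rw [← LinearEquiv.mul_apply, sigma_sq]; rfl
        rw [Set.mem_singleton_iff.1 h5, hr] at h6
        exact not_pos_and_neg (root_ne_zero i) (pos_root i) (h6 ▸ h2)
    have hfin' : {v | IsRoot cs v ∧ Pos v ∧ y' v < 0}.Finite :=
      (hy.preimage (f := sigma M i) (sigma M i).injective.injOn).subset
        fun v hv => (hmaps v hv).1
    have hlt : {v | IsRoot cs v ∧ Pos v ∧ y' v < 0}.ncard < n := by
      have h1 := Set.ncard_le_ncard_of_injOn (sigma M i) hmaps (sigma M i).injective.injOn
        (hy.subset Set.sdiff_subset)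
      have h2 : root i ∈ {v | IsRoot cs v ∧ Pos v ∧ y v < 0} :=
        ⟨isRoot_root cs i, pos_root i, hi⟩
      have h3 := Set.ncard_sdiff_singleton_lt_of_mem h2 hy
      omega
    obtain ⟨w, hw⟩ := ih _ hlt y' hfin' rfl
    refine ⟨cs.simple i * w, fun k => ?_⟩
    rw [map_mul, LinearEquiv.mul_apply, rep_simple]
    exact hw k

lemma apply_eq_sum (y : Dual ℝ (I → ℝ)) (v : I → ℝ) : y v = ∑ i, v i * y (root i) := by
  conv_lhs => rw [← Finset.univ_sum_single v]
  rw [map_sum]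
  refine Finset.sum_congr rfl fun i _ => ?_
  have : (Pi.single i (v i) : I → ℝ) = v i • root i := by
    ext k; by_cases h : k = i
    · subst h; simp [root]
    · simp [root, h]
  rw [this, map_smul, smul_eq_mul]

/-- The stabilizer of a point of the closed fundamental chamber is a standard parabolic
subgroup. -/
lemma mem_par_of_fix (y : Dual ℝ (I → ℝ)) (hy : ∀ i, 0 ≤ y (root i)) (u : W)
    (hu : ∀ v, y (rep cs u v) = y v) : u ∈ par cs {i | y (root i) = 0} := by
  induction hl : cs.length u using Nat.strong_induction_on generalizing u with
  | _ l ih =>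
    by_cases h1 : u = 1
    · rw [h1]; exact one_mem _
    obtain ⟨j, hj⟩ := cs.exists_rightDescent_of_ne_one h1
    have h2 : 0 ≤ y (-(rep cs u (root j))) := by
      rw [apply_eq_sum]
      exact Finset.sum_nonneg fun i _ => mul_nonneg (neg_of_length cs u j hj i) (hy i)
    have h3 : y (root j) = 0 := by
      have := hy j
      rw [map_neg, hu] at h2
      linarith
    have h4 : u * cs.simple j ∈ par cs {i | y (root i) = 0} := by
      refine ih _ (hl ▸ hj) _ (fun v => ?_) rfl
      rw [map_mul, LinearEquiv.mul_apply, hu, rep_simple, sigma_apply, map_sub, map_smul, h3]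
      simp
    simpa using mul_mem h4 (simple_mem_par cs (J := {i | y (root i) = 0}) h3)

/-- **Tits' theorem**: every finite subgroup of a Coxeter group is conjugate into a finite standard
parabolic subgroup. -/
theorem exists_conj_par (F : Subgroup W) (hF : (F : Set W).Finite) :
    ∃ (w : W) (J : Set I), (par cs J : Set W).Finite ∧ ∀ f ∈ F, w⁻¹ * f * w ∈ par cs J := by
  classical
  have : Finite F := hF
  have := Fintype.ofFinite F
  -- the sum of the `F`-translates of the coordinate sum, an `F`-invariant functional
  let x : Dual ℝ (I → ℝ) := ∑ i, LinearMap.proj i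
  have hx : ∀ v, x v = ∑ i, v i := fun v => by simp [x]
  let y : Dual ℝ (I → ℝ) := ∑ f : F, x ∘ₗ (rep cs (f : W)⁻¹).toLinearMap
  have hyv : ∀ v, y v = ∑ f : F, x (rep cs (f : W)⁻¹ v) := fun v => by simp [y]
  have hxpos : ∀ v, Pos v → v ≠ 0 → 0 < x v := by
    intro v h1 h2
    rw [hx]
    obtain ⟨i, hi⟩ := Function.ne_iff.1 h2
    exact Finset.sum_pos' (fun i _ => h1 i) ⟨i, Finset.mem_univ _, lt_of_le_of_ne (h1 i) hi.symm⟩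
  have hkey : ∀ (w : W) (v : I → ℝ), IsRoot cs v → y (rep cs w v) ≤ 0 → Pos v →
      v ∈ ⋃ f : F, Inv cs ((f : W)⁻¹ * w) := by
    intro w v h1 h2 h3
    by_contra hcon
    rw [Set.mem_iUnion] at hcon
    push Not at hcon
    have h4 : 0 < y (rep cs w v) := by
      rw [hyv]
      refine Finset.sum_pos (fun f _ => ?_) ⟨1, Finset.mem_univ _⟩
      have h5 : IsRoot cs (rep cs (f : W)⁻¹ (rep cs w v)) := (h1.rep cs _).rep cs _
      refine hxpos _ ?_ (h5.ne_zero cs)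
      rcases h5.pos_or_neg with h6 | h6
      · exact h6
      · refine absurd ⟨h1, h3, ?_⟩ (hcon f)
        rwa [map_mul, LinearEquiv.mul_apply]
    linarith
  have hfinU : ∀ w : W, (⋃ f : F, Inv cs ((f : W)⁻¹ * w)).Finite := fun w =>
    Set.finite_iUnion fun f => inv_finite cs _
  obtain ⟨w, hw⟩ := exists_dominant cs y ((hfinU 1).subset (by
    rintro v ⟨h1, h2, h3⟩
    exact hkey 1 v h1 (by simpa using h3.le) h2))
  let y0 : Dual ℝ (I → ℝ) := y ∘ₗ (rep cs w).toLinearMap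
  have hyF : ∀ f ∈ F, ∀ v, y (rep cs f v) = y v := by
    intro f hf v
    rw [hyv, hyv]
    refine Fintype.sum_equiv (Equiv.mulLeft (⟨f, hf⟩⁻¹ : F)) _ _ fun g => ?_
    rw [← LinearEquiv.mul_apply, ← map_mul]
    congr 3
    simp
  refine ⟨w, {i | y0 (root i) = 0}, ?_, fun f hf => ?_⟩
  · set J : Set I := {i | y0 (root i) = 0} with hJ
    let T : Set (I → ℝ) := {v | IsRoot cs v ∧ y0 v = 0}
    have hT : T.Finite := by
      refine ((hfinU w).union ((hfinU w).preimage (f := fun v : I → ℝ => -v)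
        neg_injective.injOn)).subset ?_
      rintro v ⟨h1, h2⟩
      rcases h1.pos_or_neg with h3 | h3
      · exact Or.inl (hkey w v h1 h2.le h3)
      · refine Or.inr (hkey w (-v) (h1.neg cs) ?_ h3)
        have h4 : y (rep cs w v) = 0 := h2
        rw [map_neg, map_neg, h4, neg_zero]
    have hmaps : ∀ u ∈ (par cs J : Set W), (fun i => if i ∈ J then rep cs u (root i) else 0) ∈
        Set.pi Set.univ (fun _ : I => T ∪ {0}) := by
      intro u hu i _
      dsimp only
      split_ifs with hi
      · refine Or.inl ⟨(isRoot_root cs i).rep cs u, ?_⟩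
        rw [apply_eq_sum]
        refine Finset.sum_eq_zero fun k _ => ?_
        by_cases hk : k ∈ J
        · have : y0 (root k) = 0 := hk
          rw [this, mul_zero]
        · have : k ≠ i := by rintro rfl; exact hk hi
          rw [rep_apply_of_notMem cs hu _ k hk]
          simp [root, this]
      · exact Or.inr rfl
    refine Set.Finite.of_injOn hmaps ?_
      (Set.Finite.pi fun _ => hT.union (Set.finite_singleton 0))
    intro u hu u' hu' heq
    have h1 : u⁻¹ * u' = 1 := by
      refine eq_one_of_fix cs (J := J) (mul_mem (inv_mem hu) hu') fun i hi => ?_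
      have h2 := congrFun heq i
      simp only [hi, if_true] at h2
      rw [map_mul, LinearEquiv.mul_apply, ← h2, ← LinearEquiv.mul_apply, ← map_mul]
      simp
    exact (inv_mul_eq_one.1 h1)
  · refine mem_par_of_fix cs y0 hw _ fun v => ?_
    change y (rep cs w (rep cs (w⁻¹ * f * w) v)) = y (rep cs w v)
    rw [← hyF f hf (rep cs w v)]
    simp only [← LinearEquiv.mul_apply, ← map_mul]
    congr 3
    group

/-- The Gram matrix of a finite standard parabolic subgroup is positive definite. -/
theorem gram_pos (J : Set I) (hJ : (par cs J : Set W).Finite) {n : ℕ} (f : Fin n → I)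
    (hf : Function.Injective f) (hfJ : ∀ a, f a ∈ J) (x : Fin n → ℝ) (hx : x ≠ 0) :
    0 < ∑ a, ∑ b, x a * x b * gram M (f a) (f b) := by
  classical
  have : Finite (par cs J) := hJ
  have := Fintype.ofFinite (par cs J)
  -- an inner product invariant under the finite parabolic subgroup
  let ip : (I → ℝ) →ₗ[ℝ] (I → ℝ) →ₗ[ℝ] ℝ := LinearMap.mk₂ ℝ
    (fun u v => ∑ g : par cs J, ∑ i, rep cs (g : W) u i * rep cs (g : W) v i)
    (by intro a b c; simp only [map_add, Pi.add_apply, add_mul, Finset.sum_add_distrib])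
    (by intro a b c; simp only [map_smul, Pi.smul_apply, smul_eq_mul, mul_assoc, Finset.mul_sum])
    (by intro a b c; simp only [map_add, Pi.add_apply, mul_add, Finset.sum_add_distrib])
    (by intro a b c; simp only [map_smul, Pi.smul_apply, smul_eq_mul, mul_left_comm _ a,
      Finset.mul_sum])
  have hip : ∀ u v, ip u v = ∑ g : par cs J, ∑ i, rep cs (g : W) u i * rep cs (g : W) v i :=
    fun _ _ => rfl
  have hsymm : ∀ u v, ip u v = ip v u := fun u v => by simp only [hip, mul_comm]
  have hpos : ∀ v, v ≠ 0 → 0 < ip v v := by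
    intro v hv
    rw [hip]
    refine Finset.sum_pos (fun g _ => ?_) ⟨1, Finset.mem_univ _⟩
    obtain ⟨i, hi⟩ := Function.ne_iff.1 (show rep cs (g : W) v ≠ 0 by simpa using hv)
    exact Finset.sum_pos' (fun _ _ => mul_self_nonneg _)
      ⟨i, Finset.mem_univ _, mul_self_pos.2 hi⟩
  have hinv : ∀ j ∈ J, ∀ u v, ip (sigma M j u) (sigma M j v) = ip u v := by
    intro j hj u v
    rw [hip, hip]
    refine Fintype.sum_equiv (Equiv.mulRight (⟨cs.simple j, simple_mem_par cs hj⟩ : par cs J))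
      _ _ fun g => ?_
    simp [map_mul, rep_simple]
  have hN : ∀ j ∈ J, ∀ v, 2 * ip v (root j) = coroot M j v * ip (root j) (root j) := by
    intro j hj v
    have h1 := hinv j hj v (root j)
    have hr : sigma M j (root j) = -root j := by
      rw [sigma_apply, coroot_root_self]; module
    rw [hr, sigma_apply] at h1
    simp only [map_neg, map_sub, map_smul, LinearMap.sub_apply, LinearMap.smul_apply,
      smul_eq_mul] at h1
    linarith
  let d : I → ℝ := fun j => √(ip (root j) (root j))
  have hd : ∀ j, 0 < d j := fun j => Real.sqrt_pos.2 (hpos _ (root_ne_zero j))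
  have hdd : ∀ j, d j * d j = ip (root j) (root j) := fun j =>
    Real.mul_self_sqrt (hpos _ (root_ne_zero j)).le
  have hgram : ∀ i ∈ J, ∀ j ∈ J, ip (root i) (root j) = gram M i j * (d i * d j) := by
    intro i hi j hj
    have h1 := hN j hj (root i)
    have h2 := hN i hi (root j)
    rw [coroot_root, ← hdd] at h1 h2
    rw [hsymm (root j)] at h2
    rw [gram_symm M j i] at h1
    have h2' : ip (root i) (root j) = gram M i j * (d i * d i) := by linarith
    have h1' : ip (root i) (root j) = gram M i j * (d j * d j) := by linarith
    rcases eq_or_ne (gram M i j) 0 with h0 | h0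
    · rw [h2', h0]; ring
    · have h3 : d i * d i = d j * d j := mul_left_cancel₀ h0 (h2'.symm.trans h1')
      have h4 : d i = d j := (mul_self_inj (hd i).le (hd j).le).1 h3
      rw [h2', h4]
  have hv : (∑ a, (x a / d (f a)) • root (f a)) ≠ 0 := by
    intro h0
    apply hx
    ext b
    have h1 := congrFun h0 (f b)
    simp only [Finset.sum_apply, Pi.smul_apply, smul_eq_mul, root, Pi.single_apply, hf.eq_iff,
      Pi.zero_apply, mul_ite, mul_one, mul_zero, Finset.sum_ite_eq, Finset.mem_univ, if_true] at h1
    simpa [(hd _).ne'] using h1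
  have hfinal := hpos _ hv
  simp only [map_sum, map_smul, LinearMap.sum_apply, LinearMap.smul_apply, smul_eq_mul] at hfinal
  simp only [Finset.mul_sum] at hfinal
  rw [Finset.sum_comm] at hfinal
  refine hfinal.trans_eq (Finset.sum_congr rfl fun a _ => Finset.sum_congr rfl fun b _ => ?_)
  rw [hgram _ (hfJ _) _ (hfJ _)]
  have := (hd (f a)).ne'
  have := (hd (f b)).ne'
  field_simp

end Tits

end CoxRep

/-! ### Diagrams with positive definite cosine matrix -/

namespace CoxRep

/-- The data of a diagram `m` on the vertex set `B` satisfying the axioms of a Coxeter matrix and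
having a positive definite cosine matrix. -/
structure PosDiag {X : Type*} (m : X → X → ℕ) (B : Set X) : Prop where
  symm : ∀ x ∈ B, ∀ y ∈ B, m x y = m y x
  self : ∀ x ∈ B, m x x = 1
  ne_one : ∀ x ∈ B, ∀ y ∈ B, x ≠ y → m x y ≠ 1
  pos : ∀ {n : ℕ} (f : Fin n → X), Function.Injective f → (∀ a, f a ∈ B) →
    ∀ x : Fin n → ℝ, x ≠ 0 → 0 < ∑ a, ∑ b, x a * x b * (-Real.cos (Real.pi / m (f a) (f b)))

/-- The cosine attached to a label. -/
noncomputable def kos (k : ℕ) : ℝ := Real.cos (Real.pi / k)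

lemma kos_mono {k l : ℕ} (hl : 0 < l) (h : k = 0 ∨ l ≤ k) : kos l ≤ kos k := by
  unfold kos
  have hl' : (0 : ℝ) < l := by exact_mod_cast hl
  have hl1 : (1 : ℝ) ≤ l := by exact_mod_cast hl
  apply Real.cos_le_cos_of_nonneg_of_le_pi
  · positivity
  · exact div_le_self Real.pi_pos.le hl1
  · rcases h with rfl | h
    · simp; positivity
    · exact div_le_div_of_nonneg_left Real.pi_pos.le hl' (by exact_mod_cast h)

lemma kos_nonneg {k : ℕ} (h : k ≠ 1) : 0 ≤ kos k := by
  have := kos_mono (k := k) (l := 2) two_pos (by omega)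
  simpa [kos] using this

lemma kos_three {k : ℕ} (h : k ≠ 1) (h' : k ≠ 2) : 1 / 2 ≤ kos k := by
  have := kos_mono (k := k) (l := 3) (by norm_num) (by omega)
  simpa [kos] using this

lemma kos_four {k : ℕ} (h : k = 0 ∨ 4 ≤ k) : 1 ≤ √2 * kos k := by
  have h1 := kos_mono (k := k) (l := 4) (by norm_num) h
  have h2 : kos 4 = √2 / 2 := by simp [kos]
  rw [h2] at h1
  have h3 : √2 * √2 = (2 : ℝ) := Real.mul_self_sqrt (by norm_num)
  nlinarith [Real.sqrt_nonneg 2]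

lemma kos_five {k : ℕ} (h : k = 0 ∨ 5 ≤ k) : 3 / 4 ≤ kos k := by
  have h1 := kos_mono (k := k) (l := 5) (by norm_num) h
  have h2 : kos 5 = (1 + √5) / 4 := by simp [kos]
  rw [h2] at h1
  have h3 : (2 : ℝ) ≤ √5 := Real.le_sqrt_of_sq_le (by norm_num)
  linarith

lemma kos_six {k : ℕ} (h : k = 0 ∨ 6 ≤ k) : 3 / 2 ≤ √3 * kos k := by
  have h1 := kos_mono (k := k) (l := 6) (by norm_num) h
  have h2 : kos 6 = √3 / 2 := by simp [kos]
  rw [h2] at h1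
  have h3 : √3 * √3 = (3 : ℝ) := Real.mul_self_sqrt (by norm_num)
  nlinarith [Real.sqrt_nonneg 3]

namespace PosDiag

variable {X : Type*} {m : X → X → ℕ} {B : Set X}

/-- The edge relation of the diagram. -/
def Adj (m : X → X → ℕ) (x y : X) : Prop := x ≠ y ∧ m x y ≠ 2

lemma mono (h : PosDiag m B) {B' : Set X} (hB : B' ⊆ B) : PosDiag m B' :=
  ⟨fun x hx y hy => h.symm x (hB hx) y (hB hy), fun x hx => h.self x (hB hx),
    fun x hx y hy => h.ne_one x (hB hx) y (hB hy),
    fun f hf hfB => h.pos f hf fun a => hB (hfB a)⟩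

lemma adj_symm (h : PosDiag m B) {x y : X} (hx : x ∈ B) (hy : y ∈ B) (hxy : Adj m x y) :
    Adj m y x := ⟨hxy.1.symm, by rw [h.symm y hy x hx]; exact hxy.2⟩

lemma kos_nn (h : PosDiag m B) {x y : X} (hx : x ∈ B) (hy : y ∈ B) (hxy : x ≠ y) :
    0 ≤ kos (m x y) := kos_nonneg (h.ne_one x hx y hy hxy)

lemma kos_adj (h : PosDiag m B) {x y : X} (hx : x ∈ B) (hy : y ∈ B) (hxy : Adj m x y) :
    1 / 2 ≤ kos (m x y) := kos_three (h.ne_one x hx y hy hxy.1) hxy.2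

/-! Positive definiteness of the cosine matrix on vectors supported on two to five vertices. -/

lemma pd2 (h : PosDiag m B) {a b : X} (ha : a ∈ B) (hb : b ∈ B) (hab : a ≠ b) (x y : ℝ)
    (hx : x ≠ 0) : 2 * (x * y * kos (m a b)) < x ^ 2 + y ^ 2 := by
  have hba := hab.symm
  have := h.pos ![a, b] (by
    intro i j; fin_cases i <;> fin_cases j <;> simp_all) (by
    intro i; fin_cases i <;> simp_all) ![x, y] (by
    intro h0; exact hx (congrFun h0 0))
  simp [Fin.sum_univ_succ, h.self, ha, hb, h.symm b hb a ha] at this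
  unfold kos
  linarith

lemma pd3 (h : PosDiag m B) {a b c : X} (ha : a ∈ B) (hb : b ∈ B) (hc : c ∈ B)
    (hab : a ≠ b) (hac : a ≠ c) (hbc : b ≠ c) (x y z : ℝ) (hx : x ≠ 0) :
    2 * (x * y * kos (m a b) + x * z * kos (m a c) + y * z * kos (m b c)) <
      x ^ 2 + y ^ 2 + z ^ 2 := by
  have := h.pos ![a, b, c] (by
    intro i j; fin_cases i <;> fin_cases j <;> simp_all [Ne.symm]) (by
    intro i; fin_cases i <;> simp_all) ![x, y, z] (by
    intro h0; exact hx (congrFun h0 0))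
  simp [Fin.sum_univ_succ, h.self, ha, hb, hc, h.symm b hb a ha, h.symm c hc a ha,
    h.symm c hc b hb] at this
  unfold kos
  linarith

lemma pd4 (h : PosDiag m B) {a b c d : X} (ha : a ∈ B) (hb : b ∈ B) (hc : c ∈ B) (hd : d ∈ B)
    (hab : a ≠ b) (hac : a ≠ c) (had : a ≠ d) (hbc : b ≠ c) (hbd : b ≠ d) (hcd : c ≠ d)
    (x y z t : ℝ) (hx : x ≠ 0) :
    2 * (x * y * kos (m a b) + x * z * kos (m a c) + x * t * kos (m a d) +
      y * z * kos (m b c) + y * t * kos (m b d) + z * t * kos (m c d)) <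
      x ^ 2 + y ^ 2 + z ^ 2 + t ^ 2 := by
  have := h.pos ![a, b, c, d] (by
    intro i j; fin_cases i <;> fin_cases j <;> simp_all [Ne.symm]) (by
    intro i; fin_cases i <;> simp_all) ![x, y, z, t] (by
    intro h0; exact hx (congrFun h0 0))
  simp [Fin.sum_univ_succ, h.self, ha, hb, hc, hd, h.symm b hb a ha, h.symm c hc a ha,
    h.symm c hc b hb, h.symm d hd a ha, h.symm d hd b hb, h.symm d hd c hc] at this
  unfold kos
  linarith

lemma pd5 (h : PosDiag m B) {a b c d e : X} (ha : a ∈ B) (hb : b ∈ B) (hc : c ∈ B) (hd : d ∈ B)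
    (he : e ∈ B) (hab : a ≠ b) (hac : a ≠ c) (had : a ≠ d) (hae : a ≠ e) (hbc : b ≠ c)
    (hbd : b ≠ d) (hbe : b ≠ e) (hcd : c ≠ d) (hce : c ≠ e) (hde : d ≠ e)
    (x y z t u : ℝ) (hx : x ≠ 0) :
    2 * (x * y * kos (m a b) + x * z * kos (m a c) + x * t * kos (m a d) + x * u * kos (m a e) +
      y * z * kos (m b c) + y * t * kos (m b d) + y * u * kos (m b e) + z * t * kos (m c d) +
      z * u * kos (m c e) + t * u * kos (m d e)) <
      x ^ 2 + y ^ 2 + z ^ 2 + t ^ 2 + u ^ 2 := by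
  have := h.pos ![a, b, c, d, e] (by
    intro i j; fin_cases i <;> fin_cases j <;> simp_all [Ne.symm]) (by
    intro i; fin_cases i <;> simp_all) ![x, y, z, t, u] (by
    intro h0; exact hx (congrFun h0 0))
  simp [Fin.sum_univ_succ, h.self, ha, hb, hc, hd, he, h.symm b hb a ha, h.symm c hc a ha,
    h.symm c hc b hb, h.symm d hd a ha, h.symm d hd b hb, h.symm d hd c hc, h.symm e he a ha,
    h.symm e he b hb, h.symm e he c hc, h.symm e he d hd] at this
  unfold kos
  linarith

lemma ne_zero (h : PosDiag m B) {a b : X} (ha : a ∈ B) (hb : b ∈ B) : m a b ≠ 0 := by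
  intro h0
  by_cases hab : a = b
  · subst hab; rw [h.self a ha] at h0; omega
  have := h.pd2 ha hb hab 1 1 one_ne_zero
  rw [h0] at this
  simp [kos] at this
  linarith

lemma sqrt2_sq : √2 * √2 = (2 : ℝ) := Real.mul_self_sqrt (by norm_num)
lemma sqrt3_sq : √3 * √3 = (3 : ℝ) := Real.mul_self_sqrt (by norm_num)

/-! The excluded diagrams are ruled out by evaluating the form on the null vector of the affine
diagram, or an explicit vector of negative norm for the diagram with labels `3, 5, 3`. -/

/-- There are no triangles. -/
lemma no_triangle (h : PosDiag m B) {a b c : X} (ha : a ∈ B) (hb : b ∈ B) (hc : c ∈ B)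
    (hab : Adj m a b) (hbc : Adj m b c) (hac : a ≠ c) : m a c = 2 := by
  by_contra hcon
  have h1 := h.kos_adj ha hb hab
  have h2 := h.kos_adj hb hc hbc
  have h3 := h.kos_adj ha hc ⟨hac, hcon⟩
  have := h.pd3 ha hb hc hab.1 hac hbc.1 1 1 1 one_ne_zero
  linarith

/-- Two consecutive edges have labels in `{3, 4, 5}`, and at least one of the labels is `3`. -/
lemma path3 (h : PosDiag m B) {a b c : X} (ha : a ∈ B) (hb : b ∈ B) (hc : c ∈ B)
    (hab : Adj m a b) (hbc : Adj m b c) (hac : a ≠ c) :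
    (m a b = 3 ∧ (m b c = 3 ∨ m b c = 4 ∨ m b c = 5)) ∨
    (m b c = 3 ∧ (m a b = 3 ∨ m a b = 4 ∨ m a b = 5)) := by
  have h1 := h.kos_adj ha hb hab
  have h2 := h.kos_adj hb hc hbc
  have h3 := h.kos_nn ha hc hac
  have n1 := h.ne_one a ha b hb hab.1
  have n2 := h.ne_one b hb c hc hbc.1
  have n3 := hab.2
  have n4 := hbc.2
  have z1 := h.ne_zero ha hb
  have z2 := h.ne_zero hb hc
  have h44 : ¬ (4 ≤ m a b ∧ 4 ≤ m b c) := by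
    rintro ⟨h4, h5⟩
    have k1 := kos_four (Or.inr h4)
    have k2 := kos_four (Or.inr h5)
    have := h.pd3 ha hb hc hab.1 hac hbc.1 1 (√2) 1 one_ne_zero
    nlinarith [sqrt2_sq]
  have h36 : m a b < 6 := by
    by_contra h6
    have k1 := kos_six (Or.inr (not_lt.1 h6))
    have := h.pd3 ha hb hc hab.1 hac hbc.1 (√3) 2 1 (by positivity)
    nlinarith [sqrt3_sq, mul_nonneg (Real.sqrt_nonneg 3) h3]
  have h63 : m b c < 6 := by
    by_contra h6
    have k1 := kos_six (Or.inr (not_lt.1 h6))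
    have := h.pd3 ha hb hc hab.1 hac hbc.1 1 2 (√3) one_ne_zero
    nlinarith [sqrt3_sq, mul_nonneg (Real.sqrt_nonneg 3) h3]
  omega

/-- There are no squares. -/
lemma no_square (h : PosDiag m B) {a b c d : X} (ha : a ∈ B) (hb : b ∈ B) (hc : c ∈ B)
    (hd : d ∈ B) (hab : Adj m a b) (hbc : Adj m b c) (hcd : Adj m c d) (hac : a ≠ c)
    (hbd : b ≠ d) (had : a ≠ d) : m a d = 2 := by
  by_contra hcon
  have h1 := h.kos_adj ha hb hab
  have h2 := h.kos_adj hb hc hbc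
  have h3 := h.kos_adj hc hd hcd
  have h4 := h.kos_adj ha hd ⟨had, hcon⟩
  have h5 := h.kos_nn ha hc hac
  have h6 := h.kos_nn hb hd hbd
  have := h.pd4 ha hb hc hd hab.1 hac had hbc.1 hbd hcd.1 1 1 1 1 one_ne_zero
  linarith

/-- The affine diagram `C̃₃` does not occur. -/
lemma no_C3 (h : PosDiag m B) {a b c d : X} (ha : a ∈ B) (hb : b ∈ B) (hc : c ∈ B)
    (hd : d ∈ B) (hab : 4 ≤ m a b) (hbc : Adj m b c) (hcd : 4 ≤ m c d) (hac : a ≠ c)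
    (hbd : b ≠ d) (had : a ≠ d) (nab : a ≠ b) (ncd : c ≠ d) : False := by
  have h1 := kos_four (Or.inr hab)
  have h2 := h.kos_adj hb hc hbc
  have h3 := kos_four (Or.inr hcd)
  have h4 := h.kos_nn ha hd had
  have h5 := mul_nonneg (Real.sqrt_nonneg 2) (h.kos_nn ha hc hac)
  have h6 := mul_nonneg (Real.sqrt_nonneg 2) (h.kos_nn hb hd hbd)
  have := h.pd4 ha hb hc hd nab hac had hbc.1 hbd ncd 1 (√2) (√2) 1 one_ne_zero
  nlinarith [sqrt2_sq]

/-- The affine diagram `B̃₃` does not occur. -/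
lemma no_B3 (h : PosDiag m B) {a b c d : X} (ha : a ∈ B) (hb : b ∈ B) (hc : c ∈ B)
    (hd : d ∈ B) (hba : Adj m b a) (hbc : Adj m b c) (hbd : 4 ≤ m b d) (hac : a ≠ c)
    (had : a ≠ d) (hcd : c ≠ d) (nbd : b ≠ d) : False := by
  have h1 := kos_four (Or.inr hbd)
  have h2 := h.kos_adj hb ha hba
  have h3 := h.kos_adj hb hc hbc
  have h4 := h.kos_nn ha hc hac
  have h5 := mul_nonneg (Real.sqrt_nonneg 2) (h.kos_nn ha hd had)
  have h6 := mul_nonneg (Real.sqrt_nonneg 2) (h.kos_nn hc hd hcd)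
  have := h.pd4 hb ha hc hd hba.1 hbc.1 nbd hac had hcd 2 1 1 (√2) two_ne_zero
  nlinarith [sqrt2_sq]

/-- The linear diagram with labels `3, 5, 3` does not occur. -/
lemma no_353 (h : PosDiag m B) {a b c d : X} (ha : a ∈ B) (hb : b ∈ B) (hc : c ∈ B)
    (hd : d ∈ B) (hab : Adj m a b) (hbc : 5 ≤ m b c) (hcd : Adj m c d) (hac : a ≠ c)
    (hbd : b ≠ d) (had : a ≠ d) (nbc : b ≠ c) : False := by
  have h1 := h.kos_adj ha hb hab
  have h2 := kos_five (Or.inr hbc)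
  have h3 := h.kos_adj hc hd hcd
  have h4 := h.kos_nn ha hd had
  have h5 := h.kos_nn ha hc hac
  have h6 := h.kos_nn hb hd hbd
  have := h.pd4 ha hb hc hd hab.1 hac had nbc hbd hcd.1 1 2 2 1 one_ne_zero
  linarith

/-- The affine diagram `D̃₄` does not occur. -/
lemma no_D4 (h : PosDiag m B) {a b c d e : X} (ha : a ∈ B) (hb : b ∈ B) (hc : c ∈ B) (hd : d ∈ B)
    (he : e ∈ B) (hab : Adj m a b) (hac : Adj m a c) (had : Adj m a d) (hae : Adj m a e)
    (hbc : b ≠ c) (hbd : b ≠ d) (hbe : b ≠ e) (hcd : c ≠ d) (hce : c ≠ e) (hde : d ≠ e) :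
    False := by
  have h1 := h.kos_adj ha hb hab
  have h2 := h.kos_adj ha hc hac
  have h3 := h.kos_adj ha hd had
  have h4 := h.kos_adj ha he hae
  have k1 := h.kos_nn hb hc hbc
  have k2 := h.kos_nn hb hd hbd
  have k3 := h.kos_nn hb he hbe
  have k4 := h.kos_nn hc hd hcd
  have k5 := h.kos_nn hc he hce
  have k6 := h.kos_nn hd he hde
  have := h.pd5 ha hb hc hd he hab.1 hac.1 had.1 hae.1 hbc hbd hbe hcd hce hde 2 1 1 1 1
    two_ne_zero
  linarith

/-- The affine diagram `B̃₄` does not occur: `a` and `b` are the leaves at the branch vertex `c`,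
and `d`, `e` are joined by an edge of label at least `4`. -/
lemma no_B4 (h : PosDiag m B) {a b c d e : X} (ha : a ∈ B) (hb : b ∈ B) (hc : c ∈ B) (hd : d ∈ B)
    (he : e ∈ B) (hac : Adj m a c) (hbc : Adj m b c) (hcd : Adj m c d) (hde : 4 ≤ m d e)
    (hab : a ≠ b) (had : a ≠ d) (hae : a ≠ e) (hbd : b ≠ d) (hbe : b ≠ e) (hce : c ≠ e)
    (nde : d ≠ e) : False := by
  have h1 := h.kos_adj ha hc hac
  have h2 := h.kos_adj hb hc hbc
  have h3 := h.kos_adj hc hd hcd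
  have h4 := kos_four (Or.inr hde)
  have k1 := h.kos_nn ha hb hab
  have k2 := h.kos_nn ha hd had
  have k3 := mul_nonneg (Real.sqrt_nonneg 2) (h.kos_nn ha he hae)
  have k4 := h.kos_nn hb hd hbd
  have k5 := mul_nonneg (Real.sqrt_nonneg 2) (h.kos_nn hb he hbe)
  have k6 := mul_nonneg (Real.sqrt_nonneg 2) (h.kos_nn hc he hce)
  have := h.pd5 ha hb hc hd he hab hac.1 had hae hbc.1 hbd hbe hcd.1 hce nde 1 1 2 2 (√2)
    one_ne_zero
  nlinarith [sqrt2_sq]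

/-- The affine diagram `C̃₄` does not occur. -/
lemma no_C4 (h : PosDiag m B) {a b c d e : X} (ha : a ∈ B) (hb : b ∈ B) (hc : c ∈ B) (hd : d ∈ B)
    (he : e ∈ B) (hab : 4 ≤ m a b) (hbc : Adj m b c) (hcd : Adj m c d) (hde : 4 ≤ m d e)
    (nab : a ≠ b) (hac : a ≠ c) (had : a ≠ d) (hae : a ≠ e) (hbd : b ≠ d) (hbe : b ≠ e)
    (hce : c ≠ e) (nde : d ≠ e) : False := by
  have h1 := kos_four (Or.inr hab)
  have h2 := h.kos_adj hb hc hbc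
  have h3 := h.kos_adj hc hd hcd
  have h4 := kos_four (Or.inr hde)
  have k1 := mul_nonneg (Real.sqrt_nonneg 2) (h.kos_nn ha hc hac)
  have k2 := mul_nonneg (Real.sqrt_nonneg 2) (h.kos_nn ha hd had)
  have k3 := h.kos_nn ha he hae
  have k4 := h.kos_nn hb hd hbd
  have k5 := mul_nonneg (Real.sqrt_nonneg 2) (h.kos_nn hb he hbe)
  have k6 := mul_nonneg (Real.sqrt_nonneg 2) (h.kos_nn hc he hce)
  have := h.pd5 ha hb hc hd he nab hac had hae hbc.1 hbd hbe hcd.1 hce nde 1 (√2) (√2) (√2) 1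
    one_ne_zero
  nlinarith [sqrt2_sq]

/-- The affine diagram `F̃₄` does not occur. -/
lemma no_F4 (h : PosDiag m B) {a b c d e : X} (ha : a ∈ B) (hb : b ∈ B) (hc : c ∈ B) (hd : d ∈ B)
    (he : e ∈ B) (hab : Adj m a b) (hbc : Adj m b c) (hcd : 4 ≤ m c d) (hde : Adj m d e)
    (hac : a ≠ c) (had : a ≠ d) (hae : a ≠ e) (hbd : b ≠ d) (hbe : b ≠ e)
    (ncd : c ≠ d) (hce : c ≠ e) : False := by
  have h1 := h.kos_adj ha hb hab
  have h2 := h.kos_adj hb hc hbc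
  have h3 := kos_four (Or.inr hcd)
  have h4 := h.kos_adj hd he hde
  have k1 := h.kos_nn ha hc hac
  have k2 := mul_nonneg (Real.sqrt_nonneg 2) (h.kos_nn ha hd had)
  have k3 := mul_nonneg (Real.sqrt_nonneg 2) (h.kos_nn ha he hae)
  have k4 := mul_nonneg (Real.sqrt_nonneg 2) (h.kos_nn hb hd hbd)
  have k5 := mul_nonneg (Real.sqrt_nonneg 2) (h.kos_nn hb he hbe)
  have k6 := mul_nonneg (Real.sqrt_nonneg 2) (h.kos_nn hc he hce)
  have := h.pd5 ha hb hc hd he hab.1 hac had hae hbc.1 hbd hbe ncd hce hde.1 1 2 3 (2 * √2) (√2)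
    one_ne_zero
  nlinarith [sqrt2_sq]

end PosDiag

end CoxRep

/-! ### Connected diagrams of rank four -/

namespace CoxRep

/-- Linear diagrams on four vertices with labels `x`, `y`, `z`. -/
def IsPath4 {X : Type*} (m : X → X → ℕ) (a b c d : X) (x y z : ℕ) : Prop :=
  m a b = x ∧ m b c = y ∧ m c d = z ∧ m a c = 2 ∧ m b d = 2 ∧ m a d = 2

/-- The diagram `D₄` (`B₄` in Coxeter's notation) with branch vertex `b`. -/
def IsStar4 {X : Type*} (m : X → X → ℕ) (a b c d : X) : Prop :=
  m b a = 3 ∧ m b c = 3 ∧ m b d = 3 ∧ m a c = 2 ∧ m a d = 2 ∧ m c d = 2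

/-- The connected diagrams on four vertices with positive definite cosine matrix. -/
def IsRank4 {X : Type*} (m : X → X → ℕ) (a b c d : X) : Prop :=
  IsPath4 m a b c d 3 3 3 ∨ IsPath4 m a b c d 3 3 5 ∨ IsPath4 m a b c d 3 3 4 ∨
    IsPath4 m a b c d 3 4 3 ∨ IsStar4 m a b c d

/-- Connectedness of a diagram, phrased as the existence of edges leaving proper subsets. -/
def Conn {X : Type*} (m : X → X → ℕ) (B : Set X) : Prop :=
  ∀ Y ⊆ B, Y.Nonempty → Y ≠ B → ∃ x ∈ Y, ∃ v ∈ B, v ∉ Y ∧ PosDiag.Adj m x v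

namespace PosDiag

variable {X : Type*} {m : X → X → ℕ} {B : Set X}

lemma path4 (h : PosDiag m B) {a b c d : X} (ha : a ∈ B) (hb : b ∈ B) (hc : c ∈ B) (hd : d ∈ B)
    (hab : Adj m a b) (hbc : Adj m b c) (hcd : Adj m c d) (hac : a ≠ c) (hbd : b ≠ d)
    (had : a ≠ d) : IsRank4 m a b c d ∨ IsRank4 m d c b a := by
  have h1 := h.no_triangle ha hb hc hab hbc hac
  have h2 := h.no_triangle hb hc hd hbc hcd hbd
  have h3 := h.no_square ha hb hc hd hab hbc hcd hac hbd had
  have h4 := h.path3 ha hb hc hab hbc hac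
  have h5 := h.path3 hb hc hd hbc hcd hbd
  have h6 : ¬ (4 ≤ m a b ∧ 4 ≤ m c d) := fun h6 =>
    h.no_C3 ha hb hc hd h6.1 hbc h6.2 hac hbd had hab.1 hcd.1
  have h7 : ¬ 5 ≤ m b c := fun h7 => h.no_353 ha hb hc hd hab h7 hcd hac hbd had hbc.1
  unfold IsRank4 IsPath4
  rw [h.symm d hd c hc, h.symm c hc b hb, h.symm b hb a ha, h.symm d hd b hb, h.symm c hc a ha,
    h.symm d hd a ha, h1, h2, h3]
  have h8 : m a b = 3 ∨ m a b = 4 ∨ m a b = 5 := by omega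
  have h9 : m b c = 3 ∨ m b c = 4 := by omega
  have h10 : m c d = 3 ∨ m c d = 4 ∨ m c d = 5 := by omega
  rcases h8 with h8 | h8 | h8 <;> rcases h9 with h9 | h9 <;> rcases h10 with h10 | h10 | h10 <;>
    simp [h8, h9, h10] at h4 h5 h6 ⊢

lemma star4 (h : PosDiag m B) {a b c d : X} (ha : a ∈ B) (hb : b ∈ B) (hc : c ∈ B) (hd : d ∈ B)
    (hba : Adj m b a) (hbc : Adj m b c) (hbd : Adj m b d) (hac : a ≠ c) (hcd : c ≠ d)
    (had : a ≠ d) : IsStar4 m a b c d := by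
  have h1 := h.no_triangle ha hb hc (h.adj_symm hb ha hba) hbc hac
  have h2 := h.no_triangle hc hb hd (h.adj_symm hb hc hbc) hbd hcd
  have h3 := h.no_triangle ha hb hd (h.adj_symm hb ha hba) hbd had
  have l1 : ¬ 4 ≤ m b a := fun h4 =>
    h.no_B3 hc hb hd ha hbc hbd h4 hcd hac.symm had.symm hba.1
  have l2 : ¬ 4 ≤ m b c := fun h4 =>
    h.no_B3 ha hb hd hc hba hbd h4 had hac hcd.symm hbc.1
  have l3 : ¬ 4 ≤ m b d := fun h4 =>
    h.no_B3 ha hb hc hd hba hbc h4 hac had hcd hbd.1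
  have n1 := h.ne_one b hb a ha hba.1
  have n2 := h.ne_one b hb c hc hbc.1
  have n3 := h.ne_one b hb d hd hbd.1
  have z1 := h.ne_zero hb ha
  have z2 := h.ne_zero hb hc
  have z3 := h.ne_zero hb hd
  have e1 := hba.2
  have e2 := hbc.2
  have e3 := hbd.2
  unfold IsStar4
  omega

/-- A connected diagram on four vertices `a`, `b`, `c`, `v`, with `a`, `b`, `c` a path, is one of
the five diagrams in the list. -/
lemma rank4 (h : PosDiag m B) {a b c v : X} (ha : a ∈ B) (hb : b ∈ B) (hc : c ∈ B) (hv : v ∈ B)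
    (hab : Adj m a b) (hbc : Adj m b c) (hac : a ≠ c) (hva : v ≠ a) (hvb : v ≠ b) (hvc : v ≠ c)
    (hadj : Adj m a v ∨ Adj m b v ∨ Adj m c v) :
    ∃ p q r s, ({p, q, r, s} : Set X) = {a, b, c, v} ∧ IsRank4 m p q r s := by
  rcases hadj with hadj | hadj | hadj
  · rcases h.path4 hv ha hb hc (h.adj_symm ha hv hadj) hab hbc hvb hac hvc with h1 | h1
    · exact ⟨v, a, b, c, by ext; simp; tauto, h1⟩
    · exact ⟨c, b, a, v, by ext; simp; tauto, h1⟩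
  · exact ⟨a, b, c, v, rfl, Or.inr (Or.inr (Or.inr (Or.inr
      (h.star4 ha hb hc hv (h.adj_symm ha hb hab) hbc hadj hac hvc.symm hva.symm))))⟩
  · rcases h.path4 ha hb hc hv hab hbc hadj hac hvb.symm hva.symm with h1 | h1
    · exact ⟨a, b, c, v, rfl, h1⟩
    · exact ⟨v, c, b, a, by ext; simp; tauto, h1⟩

lemma exists_adj_third (h : PosDiag m B) (hconn : Conn m B) {p q : X} (hp : p ∈ B) (hq : q ∈ B)
    (hpq : Adj m p q) (hne : ({p, q} : Set X) ≠ B) :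
    ∃ a ∈ B, ∃ b ∈ B, ∃ c ∈ B, Adj m a b ∧ Adj m b c ∧ a ≠ c ∧
      ((p = a ∧ q = b) ∨ (p = b ∧ q = a)) := by
  obtain ⟨x, hx, r, hr, hrn, hxr⟩ := hconn {p, q} (by
    rintro x (rfl | rfl) <;> assumption) ⟨p, Or.inl rfl⟩ hne
  simp only [Set.mem_insert_iff, Set.mem_singleton_iff, not_or] at hrn
  rcases hx with rfl | rfl
  · exact ⟨q, hq, x, hp, r, hr, h.adj_symm hp hq hpq, hxr, Ne.symm hrn.2, Or.inr ⟨rfl, rfl⟩⟩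
  · exact ⟨p, hp, x, hq, r, hr, hpq, hxr, Ne.symm hrn.1, Or.inl ⟨rfl, rfl⟩⟩

/-- Three vertices of a path extend to a connected diagram on four vertices. -/
lemma exists_rank4 (h : PosDiag m B) (hconn : Conn m B) {a b c : X} (ha : a ∈ B) (hb : b ∈ B)
    (hc : c ∈ B) (hab : Adj m a b) (hbc : Adj m b c) (hac : a ≠ c)
    (hne : ({a, b, c} : Set X) ≠ B) :
    ∃ v ∈ B, v ∉ ({a, b, c} : Set X) ∧
      ∃ p q r s, ({p, q, r, s} : Set X) = {a, b, c, v} ∧ IsRank4 m p q r s := by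
  obtain ⟨x, hx, v, hv, hvn, hxv⟩ := hconn {a, b, c} (by
    rintro x (rfl | rfl | rfl) <;> assumption) ⟨a, Or.inl rfl⟩ hne
  refine ⟨v, hv, hvn, ?_⟩
  simp only [Set.mem_insert_iff, Set.mem_singleton_iff, not_or] at hvn
  refine h.rank4 ha hb hc hv hab hbc hac hvn.1 hvn.2.1 hvn.2.2 ?_
  rcases hx with rfl | rfl | rfl
  · exact Or.inl hxv
  · exact Or.inr (Or.inl hxv)
  · exact Or.inr (Or.inr hxv)

end PosDiag

end CoxRep

/-! ### Generalized dihedral groups -/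

namespace CoxRep

/-- `R` is a subgroup of rotations of `D`: it is commutative, the elements outside `R` invert it,
and products of two elements outside `R` lie in `R`. -/
structure IsRot {D : Type*} [Group D] (R : Subgroup D) : Prop where
  comm : ∀ x ∈ R, ∀ y ∈ R, x * y = y * x
  invert : ∀ x, x ∉ R → ∀ r ∈ R, x * r * x⁻¹ = r⁻¹
  prod : ∀ x, x ∉ R → ∀ y, y ∉ R → x * y ∈ R

/-- Generalized dihedral groups, including the abelian groups (where every element may count as a
rotation). -/
def GenDih (D : Type*) [Group D] : Prop := ∃ R : Subgroup D, IsRot R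

lemma sq_cases {D : Type*} [Group D] {x : D} {k l : ℕ} (hk : x ^ k = 1) (hl : x ^ l = 1)
    (h : Nat.gcd k l = 1) : x = 1 := by
  rw [← orderOf_eq_one_iff, ← Nat.dvd_one, ← h]
  exact Nat.dvd_gcd (orderOf_dvd_of_pow_eq_one hk) (orderOf_dvd_of_pow_eq_one hl)

lemma eq_of_mul_eq_one {D : Type*} [Group D] {x y : D} (hy : y * y = 1) (h : x * y = 1) :
    x = y := by
  rw [mul_eq_one_iff_eq_inv.1 h]; exact (mul_eq_one_iff_inv_eq.1 hy)

/-- Commuting involutions whose product has odd order are equal. -/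
lemma eq_of_comm_odd {D : Type*} [Group D] {x y : D} (hx : x * x = 1) (hy : y * y = 1)
    {n : ℕ} (hn : (x * y) ^ n = 1) (ho : Odd n) (h : x * y = y * x) : x = y := by
  have h2 : (x * y) ^ 2 = 1 := by
    rw [pow_two]; nth_rewrite 2 [h]
    rw [mul_assoc, ← mul_assoc y, hy, one_mul, hx]
  exact eq_of_mul_eq_one hy (sq_cases hn h2 (Nat.coprime_two_right.2 ho))

namespace IsRot

variable {D : Type*} [Group D] {R : Subgroup D}

/-- Involutive rotations are central. -/
lemma central (hR : IsRot R) {x : D} (hx : x ∈ R) (h : x * x = 1) (y : D) : x * y = y * x := by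
  by_cases hy : y ∈ R
  · exact hR.comm x hx y hy
  · have h1 := hR.invert y hy x hx
    rw [mul_eq_one_iff_inv_eq.1 h, mul_inv_eq_iff_eq_mul] at h1
    exact h1.symm

lemma eq_of_mem (hR : IsRot R) {x y : D} (hx : x * x = 1) (hy : y * y = 1) {n : ℕ}
    (hn : (x * y) ^ n = 1) (ho : Odd n) (h : x ∈ R ∨ y ∈ R) : x = y := by
  rcases h with h | h
  · exact eq_of_comm_odd hx hy hn ho (hR.central h hx y)
  · exact eq_of_comm_odd hx hy hn ho (hR.central h hy x).symm

lemma pow_mul (hR : IsRot R) {u p v : D} (hp : p * p = 1) (hu' : u ∉ R) (hp' : p ∉ R)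
    (hv' : v ∉ R) {k l n : ℕ} (hk : (u * p) ^ k = 1) (hl : (p * v) ^ l = 1) (hkn : k ∣ n)
    (hln : l ∣ n) : (u * v) ^ n = 1 := by
  have h1 : u * v = (u * p) * (p * v) := by
    rw [mul_assoc, ← mul_assoc p, hp, one_mul]
  have h2 : Commute (u * p) (p * v) := hR.comm _ (hR.prod _ hu' _ hp') _ (hR.prod _ hp' _ hv')
  obtain ⟨s, rfl⟩ := hkn
  obtain ⟨t, ht⟩ := hln
  rw [h1, h2.mul_pow, _root_.pow_mul, hk, ht, _root_.pow_mul, hl, one_pow, one_pow, mul_one]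

/-- The relations of type `A₃` force the images of the two commuting generators to be equal. -/
lemma typeA3 (hR : IsRot R) {u p v : D} (hu : u * u = 1) (hp : p * p = 1) (hv : v * v = 1)
    (hup : (u * p) ^ 3 = 1) (hpv : (p * v) ^ 3 = 1) (huv : (u * v) ^ 2 = 1) : u = v := by
  have o3 : Odd 3 := by decide
  by_cases hp' : p ∈ R
  · rw [hR.eq_of_mem hu hp hup o3 (Or.inr hp'), ← hR.eq_of_mem hp hv hpv o3 (Or.inl hp')]
  by_cases hu' : u ∈ R
  · exact absurd (hR.eq_of_mem hu hp hup o3 (Or.inl hu') ▸ hu') hp'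
  by_cases hv' : v ∈ R
  · exact absurd ((hR.eq_of_mem hp hv hpv o3 (Or.inr hv')).symm ▸ hv') hp'
  exact eq_of_mul_eq_one hv (sq_cases (hR.pow_mul hp hu' hp' hv' hup hpv dvd_rfl dvd_rfl) huv
    (by norm_num))

/-- The relations of type `C₃` (which also hold in the first three generators of type `F₄`). -/
lemma typeC3 (hR : IsRot R) {a b c : D} (ha : a * a = 1) (hb : b * b = 1) (hc : c * c = 1)
    (hab : (a * b) ^ 3 = 1) (hac : (a * c) ^ 2 = 1) (hbc : (b * c) ^ 4 = 1) :
    (b * c) ^ 2 = 1 := by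
  have o3 : Odd 3 := by decide
  have hcc : ∀ x y : D, x * x = 1 → y * y = 1 → x * y = y * x → (x * y) ^ 2 = 1 := by
    intro x y hx hy h
    rw [Commute.mul_pow h, pow_two, pow_two, hx, hy, mul_one]
  by_cases hb' : b ∈ R
  · exact hcc b c hb hc (hR.central hb' hb c)
  by_cases hc' : c ∈ R
  · exact hcc b c hb hc (hR.central hc' hc b).symm
  by_cases ha' : a ∈ R
  · exact absurd (hR.eq_of_mem ha hb hab o3 (Or.inl ha') ▸ ha') hb'
  have hba : (b * a) ^ 3 = 1 := by
    have h1 : b * a = (a * b)⁻¹ := by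
      rw [mul_inv_rev, mul_eq_one_iff_inv_eq.1 ha, mul_eq_one_iff_inv_eq.1 hb]
    rw [h1, inv_pow, hab, inv_one]
  have h6 := hR.pow_mul (n := 6) ha hb' ha' hc' hba hac (by norm_num) (by norm_num)
  rw [← orderOf_dvd_iff_pow_eq_one] at h6 hbc ⊢
  exact Nat.dvd_gcd h6 hbc

/-- The relations of type `H₃` force all the images to be equal. -/
lemma typeH3 (hR : IsRot R) {a b c : D} (ha : a * a = 1) (hb : b * b = 1) (hc : c * c = 1)
    (hab : (a * b) ^ 3 = 1) (hbc : (b * c) ^ 5 = 1) (hac : (a * c) ^ 2 = 1) :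
    a = b ∧ b = c := by
  have o3 : Odd 3 := by decide
  have o5 : Odd 5 := by decide
  by_cases hb' : b ∈ R
  · exact ⟨hR.eq_of_mem ha hb hab o3 (Or.inr hb'), hR.eq_of_mem hb hc hbc o5 (Or.inl hb')⟩
  by_cases ha' : a ∈ R
  · exact absurd (hR.eq_of_mem ha hb hab o3 (Or.inl ha') ▸ ha') hb'
  by_cases hc' : c ∈ R
  · exact absurd ((hR.eq_of_mem hb hc hbc o5 (Or.inr hc')).symm ▸ hc') hb'
  have h15 := hR.pow_mul (n := 15) hb ha' hb' hc' hab hbc (by norm_num) (by norm_num)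
  have hca : a = c := eq_of_mul_eq_one hc (sq_cases h15 hac (by norm_num))
  subst hca
  have h5 : (a * b) ^ 5 = 1 := by
    have h1 : a * b = (b * a)⁻¹ := by
      rw [mul_inv_rev, mul_eq_one_iff_inv_eq.1 ha, mul_eq_one_iff_inv_eq.1 hb]
    rw [h1, inv_pow, hbc, inv_one]
  have := eq_of_mul_eq_one hb (sq_cases hab h5 (by norm_num))
  exact ⟨this, this.symm⟩

end IsRot

end CoxRep

/-! ### Coxeter relations in generalized dihedral groups -/

namespace CoxRep

section Rel

variable {X : Type*} {m : X → X → ℕ} {B : Set X} {D : Type*} [Group D] {R : Subgroup D}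
  {g : X → D}

/-- A family of elements satisfying the Coxeter relations of the diagram `m` on `B`. -/
def IsRel (m : X → X → ℕ) (B : Set X) (g : X → D) : Prop :=
  ∀ x ∈ B, ∀ y ∈ B, (g x * g y) ^ m x y = 1

lemma IsRel.sq (hg : IsRel m B g) (h : PosDiag m B) {x : X} (hx : x ∈ B) : g x * g x = 1 := by
  have := hg x hx x hx
  rwa [h.self x hx, pow_one] at this

lemma IsRel.rel (hg : IsRel m B g) {x y : X} (hx : x ∈ B) (hy : y ∈ B) {k : ℕ} (h : m x y = k) :
    (g x * g y) ^ k = 1 := h ▸ hg x hx y hy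

lemma IsRel.comm (hg : IsRel m B g) (h : PosDiag m B) {x y : X} (hx : x ∈ B) (hy : y ∈ B)
    (hxy : m x y = 2) : g x * g y = g y * g x := by
  have h1 := hg.rel hx hy hxy
  rw [pow_two] at h1
  have h2 := mul_eq_one_iff_inv_eq.1 h1
  rw [mul_inv_rev, mul_eq_one_iff_inv_eq.1 (hg.sq h hx), mul_eq_one_iff_inv_eq.1 (hg.sq h hy)] at h2
  exact h2.symm

lemma rel_path333 (hR : IsRot R) (h : PosDiag m B) (hg : IsRel m B g) {a b c d : X} (ha : a ∈ B)
    (hb : b ∈ B) (hc : c ∈ B) (hd : d ∈ B) (hp : IsPath4 m a b c d 3 3 3) :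
    g a = g b ∧ g b = g c ∧ g c = g d := by
  obtain ⟨h1, h2, h3, h4, h5, h6⟩ := hp
  have e1 := hR.typeA3 (hg.sq h ha) (hg.sq h hb) (hg.sq h hc) (hg.rel ha hb h1)
    (hg.rel hb hc h2) (hg.rel ha hc h4)
  have e2 := hR.typeA3 (hg.sq h hb) (hg.sq h hc) (hg.sq h hd) (hg.rel hb hc h2)
    (hg.rel hc hd h3) (hg.rel hb hd h5)
  have e3 := hg.comm h ha hd h6
  have e4 : g a = g b := eq_of_comm_odd (hg.sq h ha) (hg.sq h hb) (hg.rel ha hb h1)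
    (by decide) (e2 ▸ e3)
  exact ⟨e4, e4 ▸ e1, (e4 ▸ e1).symm.trans e2⟩

lemma rel_path335 (hR : IsRot R) (h : PosDiag m B) (hg : IsRel m B g) {a b c d : X} (ha : a ∈ B)
    (hb : b ∈ B) (hc : c ∈ B) (hd : d ∈ B) (hp : IsPath4 m a b c d 3 3 5) :
    g a = g b ∧ g b = g c ∧ g c = g d := by
  obtain ⟨h1, h2, h3, h4, h5, h6⟩ := hp
  have e1 := hR.typeA3 (hg.sq h ha) (hg.sq h hb) (hg.sq h hc) (hg.rel ha hb h1)
    (hg.rel hb hc h2) (hg.rel ha hc h4)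
  have e2 := hR.typeH3 (hg.sq h hb) (hg.sq h hc) (hg.sq h hd) (hg.rel hb hc h2)
    (hg.rel hc hd h3) (hg.rel hb hd h5)
  exact ⟨e1.trans e2.1.symm, e2⟩

/-- If a further vertex `e` is attached to the leaf `a` of a diagram of type `D₄`, all vertices of
that diagram have the same image: both `e, a, b, c` and `e, a, b, d` are of type `A₄`. -/
lemma star_aux (hR : IsRot R) (h : PosDiag m B) (hg : IsRel m B g) {a b c d e : X} (ha : a ∈ B)
    (hb : b ∈ B) (hc : c ∈ B) (hd : d ∈ B) (he : e ∈ B) (hs : IsStar4 m a b c d)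
    (hab : a ≠ b) (hac : a ≠ c) (had : a ≠ d) (hbc : b ≠ c) (hbd : b ≠ d) (hcd : c ≠ d)
    (hea : e ≠ a) (heb : e ≠ b) (hec : e ≠ c) (hed : e ≠ d) (hadj : PosDiag.Adj m a e) :
    g a = g b ∧ g a = g c ∧ g a = g d := by
  obtain ⟨h1, h2, h3, h4, h5, h6⟩ := hs
  have a1 : PosDiag.Adj m a b := ⟨hab, by rw [h.symm a ha b hb]; omega⟩
  have a2 : PosDiag.Adj m c b := ⟨hbc.symm, by rw [h.symm c hc b hb]; omega⟩
  have a3 : PosDiag.Adj m d b := ⟨hbd.symm, by rw [h.symm d hd b hb]; omega⟩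
  have a4 := h.adj_symm ha hb a1
  have a5 := h.adj_symm hc hb a2
  have a6 := h.adj_symm hd hb a3
  have a7 := h.adj_symm ha he hadj
  have l1 : ¬ 4 ≤ m a e := fun h4 => h.no_B4 hc hd hb ha he a2 a3 a4 h4 hcd hac.symm hec.symm
    had.symm hed.symm heb.symm hea.symm
  have l2 := h.ne_one a ha e he hea.symm
  have l3 := hadj.2
  have l4 := h.ne_zero ha he
  have t1 := h.no_triangle he ha hb a7 a1 heb
  have t2 := h.no_square he ha hb hc a7 a1 a5 heb hac hec
  have t3 := h.no_square he ha hb hd a7 a1 a6 heb had hed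
  have l5 : m e a = 3 := by rw [h.symm e he a ha]; omega
  have l6 : m a b = 3 := by rw [h.symm a ha b hb]; exact h1
  have p1 := rel_path333 hR h hg he ha hb hc ⟨l5, l6, h2, t1, h4, t2⟩
  have p2 := rel_path333 hR h hg he ha hb hd ⟨l5, l6, h3, t1, h5, t3⟩
  exact ⟨p1.2.1, p1.2.1.trans p1.2.2, p2.2.1.trans p2.2.2⟩

/-- Four vertices spanning a connected diagram inside a larger connected diagram have commuting
images in every generalized dihedral group. -/
lemma rank4_comm (hR : IsRot R) (h : PosDiag m B) (hconn : Conn m B) (hg : IsRel m B g)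
    {a b c d : X} (ha : a ∈ B) (hb : b ∈ B) (hc : c ∈ B) (hd : d ∈ B)
    (hr : IsRank4 m a b c d) (hab : a ≠ b) (hac : a ≠ c) (had : a ≠ d) (hbc : b ≠ c)
    (hbd : b ≠ d) (hcd : c ≠ d) (hne : ({a, b, c, d} : Set X) ≠ B) :
    ∀ x ∈ ({a, b, c, d} : Set X), ∀ y ∈ ({a, b, c, d} : Set X), g x * g y = g y * g x := by
  have hall : ∀ w : D, (∀ x ∈ ({a, b, c, d} : Set X), g x = w) →
      ∀ x ∈ ({a, b, c, d} : Set X), ∀ y ∈ ({a, b, c, d} : Set X), g x * g y = g y * g x := by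
    intro w hw x hx y hy
    rw [hw x hx, hw y hy]
  obtain ⟨x, hx, e, he, hen, hxe⟩ := hconn {a, b, c, d} (by
    rintro x (rfl | rfl | rfl | rfl) <;> assumption) ⟨a, Or.inl rfl⟩ hne
  simp only [Set.mem_insert_iff, Set.mem_singleton_iff, not_or] at hen
  obtain ⟨hea, heb, hec, hed⟩ : e ≠ a ∧ e ≠ b ∧ e ≠ c ∧ e ≠ d := hen
  rcases hr with hr | hr | hr | hr | hr
  · obtain ⟨p1, p2, p3⟩ := rel_path333 hR h hg ha hb hc hd hr
    apply hall (g d)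
    rintro x (rfl | rfl | rfl | rfl) <;> simp [*]
  · obtain ⟨p1, p2, p3⟩ := rel_path335 hR h hg ha hb hc hd hr
    apply hall (g d)
    rintro x (rfl | rfl | rfl | rfl) <;> simp [*]
  · obtain ⟨h1, h2, h3, h4, h5, h6⟩ := hr
    have ab : PosDiag.Adj m a b := ⟨hab, by omega⟩
    have bc : PosDiag.Adj m b c := ⟨hbc, by omega⟩
    have cd : PosDiag.Adj m c d := ⟨hcd, by omega⟩
    rcases hx with rfl | rfl | rfl | rfl
    · have a7 := h.adj_symm ha he hxe
      have l1 : ¬ 4 ≤ m e x := fun h4 => h.no_C4 he ha hb hc hd h4 ab bc h3.ge hea heb hec hed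
        hac had hbd hcd
      have l2 := h.ne_one e he x ha hea
      have l3 := a7.2
      have l4 := h.ne_zero he ha
      have t1 := h.no_triangle he ha hb a7 ab heb
      have t2 := h.no_square he ha hb hc a7 ab bc heb hac hec
      have p1 := rel_path333 hR h hg he ha hb hc ⟨by omega, h1, h2, t1, h4, t2⟩
      have hd' := hg.comm h ha hd h6
      have e1 : g b = g x := p1.2.1.symm
      have e2 : g c = g x := (p1.2.1.trans p1.2.2).symm
      rintro y (rfl | rfl | rfl | rfl) z (rfl | rfl | rfl | rfl) <;>
        simp [e1, e2, hd']
    · exact (h.no_B4 ha he hb hc hd ab (h.adj_symm hb he hxe) bc h3.ge hea.symm hac had hec hed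
        hbd hcd).elim
    · exact (h.no_B3 hb hc he hd (h.adj_symm hb hc bc) hxe h3.ge heb.symm hbd hed hcd).elim
    · exact (h.no_F4 ha hb hc hd he ab bc h3.ge hxe hac had hea.symm hbd heb.symm hcd
        hec.symm).elim
  · obtain ⟨h1, h2, h3, h4, h5, h6⟩ := hr
    have ab : PosDiag.Adj m a b := ⟨hab, by omega⟩
    have cd : PosDiag.Adj m c d := ⟨hcd, by omega⟩
    have h2' : 4 ≤ m c b := by rw [h.symm c hc b hb]; omega
    have ba := h.adj_symm ha hb ab
    have dc := h.adj_symm hc hd cd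
    rcases hx with rfl | rfl | rfl | rfl
    · exact (h.no_F4 he ha hb hc hd (h.adj_symm ha he hxe) ab h2.ge cd heb hec hed hac had hbc
        hbd).elim
    · exact (h.no_B3 ha hb he hc ba hxe h2.ge hea.symm hac hec hbc).elim
    · exact (h.no_B3 hd hc he hb cd hxe h2' hed.symm hbd.symm heb hbc.symm).elim
    · exact (h.no_F4 he hd hc hb ha (h.adj_symm hd he hxe) dc h2' ba hec heb hea hbd.symm
        had.symm hbc.symm hac.symm).elim
  · have hs := hr
    obtain ⟨h1, h2, h3, h4, h5, h6⟩ := hr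
    rcases hx with rfl | rfl | rfl | rfl
    · obtain ⟨p1, p2, p3⟩ := star_aux hR h hg ha hb hc hd he hs hab hac had hbc hbd hcd hea heb hec
        hed hxe
      apply hall (g x)
      rintro y (rfl | rfl | rfl | rfl) <;> simp [← p1, ← p2, ← p3]
    · exact (h.no_D4 hb ha hc hd he ⟨hab.symm, by omega⟩ ⟨hbc, by omega⟩ ⟨hbd, by omega⟩ hxe
        hac had hea.symm hcd hec.symm hed.symm).elim
    · obtain ⟨p1, p2, p3⟩ := star_aux hR h hg hc hb ha hd he
        ⟨h2, h1, h3, by rwa [h.symm x hc a ha], h6, h5⟩ hbc.symm hac.symm hcd hab.symm hbd had hec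
        heb hea hed hxe
      apply hall (g x)
      rintro y (rfl | rfl | rfl | rfl) <;> simp [← p1, ← p2, ← p3]
    · obtain ⟨p1, p2, p3⟩ := star_aux hR h hg hd hb ha hc he
        ⟨h3, h1, h2, by rwa [h.symm x hd a ha], by rwa [h.symm x hd c hc], h4⟩ hbd.symm had.symm
        hcd.symm hab.symm hbc hac hed heb hea hec hxe
      apply hall (g x)
      rintro y (rfl | rfl | rfl | rfl) <;> simp [← p1, ← p2, ← p3]

lemma ncard_le_four {a b c d : X} : ({a, b, c, d} : Set X).ncard ≤ 4 := by
  have h1 := Set.ncard_insert_le a {b, c, d}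
  have h2 := Set.ncard_insert_le b {c, d}
  have h3 := Set.ncard_insert_le c {d}
  have h4 := Set.ncard_singleton d
  omega

/-- In rank at least five, all generators have commuting images in every generalized dihedral
group. -/
lemma rank5_comm (hR : IsRot R) (h : PosDiag m B) (hconn : Conn m B) (hg : IsRel m B g)
    (hB : 5 ≤ B.ncard) {p q : X} (hp : p ∈ B) (hq : q ∈ B) : g p * g q = g q * g p := by
  by_cases hpq : p = q
  · rw [hpq]
  by_cases h2 : m p q = 2
  · exact hg.comm h hp hq h2
  obtain ⟨a, ha, b, hb, c, hc, hab, hbc, hac, hpqab⟩ := h.exists_adj_third hconn hp hq ⟨hpq, h2⟩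
    (by
      rintro rfl
      have := Set.ncard_insert_le p {q}
      rw [Set.ncard_singleton] at this
      omega)
  obtain ⟨v, hv, hvn, p', q', r', s', hset, hr⟩ := h.exists_rank4 hconn ha hb hc hab hbc hac (by
      rintro rfl
      have := ncard_le_four (a := a) (b := a) (c := b) (d := c)
      simp only [Set.insert_eq_of_mem (Set.mem_insert _ _)] at this
      omega)
  have hsub : ({p', q', r', s'} : Set X) ⊆ B := by
    rw [hset]; rintro x (rfl | rfl | rfl | rfl) <;> assumption
  have hp' : p' ∈ B := hsub (by simp)
  have hq' : q' ∈ B := hsub (by simp)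
  have hr' : r' ∈ B := hsub (by simp)
  have hs' : s' ∈ B := hsub (by simp)
  have hdist : ∀ {x y : X}, x ∈ B → m x y ≠ 1 → x ≠ y := by
    rintro x y hx hxy rfl; exact hxy (h.self x hx)
  have hd : p' ≠ q' ∧ p' ≠ r' ∧ p' ≠ s' ∧ q' ≠ r' ∧ q' ≠ s' ∧ r' ≠ s' := by
    rcases hr with hr | hr | hr | hr | hr <;> obtain ⟨h1, h2, h3, h4, h5, h6⟩ := hr
    on_goal 5 => exact ⟨(hdist hq' (by omega)).symm, hdist hp' (by omega), hdist hp' (by omega),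
      hdist hq' (by omega), hdist hq' (by omega), hdist hr' (by omega)⟩
    all_goals exact ⟨hdist hp' (by omega), hdist hp' (by omega), hdist hp' (by omega),
      hdist hq' (by omega), hdist hq' (by omega), hdist hr' (by omega)⟩
  obtain ⟨d1, d2, d3, d4, d5, d6⟩ := hd
  have hcomm := rank4_comm hR h hconn hg hp' hq' hr' hs' hr d1 d2 d3 d4 d5 d6 (by
      intro h0
      have := ncard_le_four (a := p') (b := q') (c := r') (d := s')
      rw [h0] at this
      omega)
  rw [hset] at hcomm
  rcases hpqab with ⟨rfl, rfl⟩ | ⟨rfl, rfl⟩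
  · exact hcomm _ (by simp) _ (by simp)
  · exact hcomm _ (by simp) _ (by simp)

end Rel

end CoxRep

/-! ### The dihedral radical; facts about a Coxeter system -/

namespace CoxRep

universe u

section Rad

variable {W' : Type u} [Group W'] {W : Type u} [Group W]

/-- The element `x` of the subgroup `H` is killed by every homomorphism from `H` to a generalized
dihedral group. -/
def InRad (H : Subgroup W) (x : W) : Prop :=
  ∃ hx : x ∈ H, ∀ (D : Type u) [Group D], GenDih D → ∀ φ : H →* D, φ ⟨x, hx⟩ = 1

lemma InRad.mono {H K : Subgroup W} (hHK : H ≤ K) {x : W} (h : InRad H x) : InRad K x :=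
  ⟨hHK h.1, fun D _ hD φ => h.2 D hD (φ.comp (Subgroup.inclusion hHK))⟩

lemma InRad.map (f : W →* W') {H : Subgroup W} {x : W} (h : InRad H x) :
    InRad (H.map f) (f x) :=
  ⟨Subgroup.mem_map_of_mem f h.1, fun D _ hD φ => h.2 D hD (φ.comp (f.subgroupMap H))⟩

variable (W) in
/-- The normal subgroup generated by the elements of finite subgroups which are killed by all
homomorphisms from the finite subgroup to generalized dihedral groups. It is defined without
reference to Coxeter generators. -/
def dihRad : Subgroup W :=
  Subgroup.normalClosure {x | ∃ F : Subgroup W, (F : Set W).Finite ∧ InRad F x}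

lemma dihRad_map_le (f : W →* W) (hf : Function.Surjective f) :
    (dihRad W).map f ≤ dihRad W := by
  rw [dihRad, Subgroup.map_normalClosure _ _ hf]
  apply Subgroup.normalClosure_mono
  rintro _ ⟨x, ⟨F, hF, hx⟩, rfl⟩
  exact ⟨F.map f, by rw [Subgroup.coe_map]; exact hF.image _, hx.map f⟩

lemma dihRad_map (f : W ≃* W) : (dihRad W).map f.toMonoidHom = dihRad W := by
  refine le_antisymm (dihRad_map_le _ f.surjective) fun x hx => ?_
  refine ⟨f.symm x, dihRad_map_le f.symm.toMonoidHom f.symm.surjective ⟨x, hx, rfl⟩, ?_⟩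
  simp

lemma genDih_of_comm {D : Type*} [Group D] (h : ∀ x y : D, x * y = y * x) : GenDih D :=
  ⟨⊤, fun x _ y _ => h x y, fun _ hx => absurd trivial hx, fun _ _ _ _ => trivial⟩

/-- A group generated by two involutions is dihedral: the rotations are the powers of the product
of the generators. -/
lemma genDih_of_two {D : Type*} [Group D] {a b : D} (ha : a * a = 1) (hb : b * b = 1)
    (h : Subgroup.closure {a, b} = ⊤) : GenDih D := by
  have ha' : a⁻¹ = a := mul_eq_one_iff_inv_eq.1 ha
  have hb' : b⁻¹ = b := mul_eq_one_iff_inv_eq.1 hb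
  set R := Subgroup.zpowers (a * b) with hR
  have hab : a * b ∈ R := Subgroup.mem_zpowers _
  have hinv : ∀ r ∈ R, a * r * a⁻¹ = r⁻¹ := by
    rintro r ⟨k, rfl⟩
    show a * (a * b) ^ k * a⁻¹ = ((a * b) ^ k)⁻¹
    rw [← conj_zpow, ← inv_zpow]
    congr 1
    rw [mul_inv_rev, ha', hb', ← mul_assoc, ha, one_mul]
  have hcomm : ∀ x ∈ R, ∀ y ∈ R, x * y = y * x := by
    rintro _ ⟨k, rfl⟩ _ ⟨l, rfl⟩
    exact (Commute.refl (a * b)).zpow_zpow k l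
  have key : ∀ r ∈ R, a * r = r⁻¹ * a := fun r hr => by rw [← hinv r hr]; group
  have hall : ∀ x : D, x ∈ R ∨ a * x ∈ R := by
    intro x
    have hx : x ∈ Subgroup.closure {a, b} := h ▸ Subgroup.mem_top x
    have step : ∀ g : D, (g = a ∨ g = b) → ∀ y, (y ∈ R ∨ a * y ∈ R) → (g * y ∈ R ∨ a * (g * y) ∈ R) := by
      rintro g (rfl | rfl) y (hy | hy)
      · right; rwa [← mul_assoc, ha, one_mul]
      · left; exact hy
      · right; rw [← mul_assoc]; exact R.mul_mem hab hy
      · left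
        have : g * y = (a * g)⁻¹ * (a * y) := by
          rw [mul_inv_rev, hb', mul_assoc, inv_mul_cancel_left]
        rw [this]
        exact R.mul_mem (R.inv_mem hab) hy
    induction hx using Subgroup.closure_induction_left with
    | one => exact Or.inl R.one_mem
    | mul_left x hx y _ ih => exact step x hx y ih
    | inv_mul_cancel x hx y _ ih =>
      have : x⁻¹ = x := by rcases hx with rfl | rfl <;> assumption
      rw [this]; exact step x hx y ih
  have hout : ∀ x, x ∉ R → ∃ r ∈ R, x = a * r := fun x hx =>
    ⟨a * x, (hall x).resolve_left hx, by rw [← mul_assoc, ha, one_mul]⟩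
  refine ⟨R, hcomm, ?_, ?_⟩
  · intro x hx r hr
    obtain ⟨s, hs, rfl⟩ := hout x hx
    rw [← hinv r hr]
    calc a * s * r * (a * s)⁻¹ = a * (s * r) * s⁻¹ * a⁻¹ := by group
      _ = a * (r * s) * s⁻¹ * a⁻¹ := by rw [hcomm s hs r hr]
      _ = a * r * a⁻¹ := by group
  · intro x hx y hy
    obtain ⟨s, hs, rfl⟩ := hout x hx
    obtain ⟨t, ht, rfl⟩ := hout y hy
    have : a * s * (a * t) = s⁻¹ * t := by
      rw [key s hs]
      calc s⁻¹ * a * (a * t) = s⁻¹ * (a * a) * t := by group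
        _ = s⁻¹ * t := by rw [ha, mul_one]
    rw [this]
    exact R.mul_mem (R.inv_mem hs) ht

end Rad

section Sys

variable {W : Type u} [Group W]

/-- The facts about a finite rank Coxeter system which enter the comparison of `N(W)` with
`dihRad W`. -/
structure Sys (m : W → W → ℕ) (S : Set W) : Prop where
  fin : S.Finite
  gen : Subgroup.closure S = ⊤
  one_notMem : (1 : W) ∉ S
  rel : IsRel m S (id : W → W)
  self : ∀ s ∈ S, m s s = 1
  symm : ∀ s ∈ S, ∀ t ∈ S, m s t = m t s
  posDiag : ∀ B ⊆ S, (Subgroup.closure B : Set W).Finite → PosDiag m B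
  inter : ∀ B ⊆ S, ∀ C ⊆ S, Disjoint B C → ∀ w, w ∈ Subgroup.closure B →
    w ∈ Subgroup.closure C → w = 1
  conj : ∀ F : Subgroup W, (F : Set W).Finite → ∃ (w : W) (B : Set W), B ⊆ S ∧
    (Subgroup.closure B : Set W).Finite ∧ ∀ f ∈ F, w⁻¹ * f * w ∈ Subgroup.closure B

lemma sys_of_isCoxeterSystemOn {m : W → W → ℕ} {S : Set W} (h : IsCoxeterSystemOn m S)
    (hfin : S.Finite) : Sys m S := by
  classical
  obtain ⟨M, cs, hs, hm⟩ := h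
  have : Fintype S := hfin.fintype
  have him : ∀ J : Set S, cs.simple '' J = Subtype.val '' J := fun J =>
    Set.image_congr fun s _ => hs s
  have hpar : ∀ B ⊆ S, Subgroup.closure B = par cs (Subtype.val ⁻¹' B) := fun B hB => by
    rw [par, him, Subtype.image_preimage_coe, Set.inter_eq_right.2 hB]
  have hself : ∀ s ∈ S, m s s = 1 := fun s hs' => by
    rw [← hm ⟨s, hs'⟩ ⟨s, hs'⟩]; exact M.diagonal _
  have hsymm : ∀ s ∈ S, ∀ t ∈ S, m s t = m t s := fun s hs' t ht => by
    rw [← hm ⟨s, hs'⟩ ⟨t, ht⟩, ← hm ⟨t, ht⟩ ⟨s, hs'⟩, M.symmetric]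
  refine ⟨hfin, ?_, ?_, ?_, hself, hsymm, ?_, ?_, ?_⟩
  · rw [← cs.subgroup_closure_range_simple]
    congr 1
    ext x
    constructor
    · exact fun hx => ⟨⟨x, hx⟩, hs _⟩
    · rintro ⟨s, rfl⟩; rw [hs]; exact s.2
  · intro h1
    have h2 := cs.length_simple ⟨1, h1⟩
    rw [hs, cs.length_one] at h2
    exact absurd h2 (by norm_num)
  · intro s hs' t ht
    have := cs.simple_mul_simple_pow ⟨s, hs'⟩ ⟨t, ht⟩
    rwa [hs, hs, hm] at this
  · intro B hB hBf
    rw [hpar B hB] at hBf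
    refine ⟨fun x hx y hy => hsymm x (hB hx) y (hB hy), fun x hx => hself x (hB hx), ?_, ?_⟩
    · intro x hx y hy hxy
      rw [← hm ⟨x, hB hx⟩ ⟨y, hB hy⟩]
      exact M.off_diagonal _ _ fun e => hxy (congrArg Subtype.val e)
    · intro n f hf hfB x hx
      have := gram_pos cs _ hBf (fun a => (⟨f a, hB (hfB a)⟩ : S))
        (fun a b e => hf (congrArg Subtype.val e)) hfB x hx
      simpa only [gram, hm] using this
  · intro B hB C hC hd w hwB hwC
    rw [hpar B hB] at hwB
    rw [hpar C hC] at hwC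
    exact par_inter cs (hd.preimage _) hwB hwC
  · intro F hF
    obtain ⟨w, J, hJ, hw⟩ := exists_conj_par cs F hF
    rw [par, him] at hJ
    refine ⟨w, Subtype.val '' J, by rintro _ ⟨s, _, rfl⟩; exact s.2, hJ, ?_⟩
    rw [par, him] at hw
    exact hw

/-- Irreducibility in terms of edges leaving proper subsets. -/
lemma conn_of_isIrreducibleOn {m : W → W → ℕ} {B : Set W} (h : IsIrreducibleOn m B) :
    Conn m B := by
  intro Y hY ⟨y, hy⟩ hne
  by_contra! hcon
  refine hne (hY.antisymm fun v hv => ?_)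
  have := h.2 y (hY hy) v hv
  clear hv
  induction this with
  | refl => exact hy
  | @tail b c _ hbc ih =>
    obtain ⟨_, hc, hne', hm⟩ := hbc
    by_contra hcY
    exact hcon b ih c hc hcY ⟨hne', by omega⟩

lemma isIrreducibleOn_of_conn {m : W → W → ℕ} {B : Set W} (h : PosDiag m B) (hne : B.Nonempty)
    (hc : Conn m B) : IsIrreducibleOn m B := by
  refine ⟨hne, fun u hu v hv => ?_⟩
  set Y : Set W := {y ∈ B | Relation.ReflTransGen
      (fun x y => x ∈ B ∧ y ∈ B ∧ x ≠ y ∧ (m x y = 0 ∨ 2 < m x y)) u y} with hY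
  by_contra hcon
  obtain ⟨x, hx, w, hw, hwY, hadj⟩ := hc Y (fun y hy => hy.1) ⟨u, hu, .refl⟩
    (fun e => hcon (e ▸ hv : v ∈ Y).2)
  refine hwY ⟨hw, hx.2.tail ⟨hx.1, hw, hadj.1, ?_⟩⟩
  have := h.ne_one x hx.1 w hw hadj.1
  have := hadj.2
  omega

end Sys

end CoxRep

/-! ### `N(W)` lies in the dihedral radical -/

namespace CoxRep

universe u

section Types

lemma hasType_iff {W : Type*} {m : W → W → ℕ} {B : Set W} {n : ℕ} {std : Fin n → Fin n → ℕ} :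
    HasType m B std ↔ ∃ f : Fin n → W, Function.Injective f ∧ Set.range f = B ∧
      ∀ i j, m (f i) (f j) = std i j := by
  constructor
  · rintro ⟨e, he⟩
    refine ⟨fun i => (e.symm i : W), Subtype.val_injective.comp e.symm.injective, ?_, fun i j => ?_⟩
    · rw [Set.range_comp' Subtype.val e.symm, e.symm.surjective.range_eq, Set.image_univ,
        Subtype.range_coe]
    · rw [he, e.apply_symm_apply, e.apply_symm_apply]
  · rintro ⟨f, hf, rfl, h⟩
    refine ⟨(Equiv.ofInjective f hf).symm, ?_⟩
    rintro ⟨_, i, rfl⟩ ⟨_, j, rfl⟩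
    have : ∀ i, (Equiv.ofInjective f hf).symm ⟨f i, i, rfl⟩ = i := fun i =>
      (Equiv.ofInjective f hf).symm_apply_apply i
    rw [this, this]; exact h i j

end Types

section Upper

variable {W : Type u} [Group W] {m : W → W → ℕ} {S : Set W}

open scoped Classical in
/-- The restriction of a homomorphism defined on `⟨B⟩`, extended by `1` to all of `W`. -/
noncomputable def ext {H : Subgroup W} {D : Type*} [Group D] (φ : H →* D) (x : W) : D :=
  if h : x ∈ H then φ ⟨x, h⟩ else 1

lemma ext_eq {H : Subgroup W} {D : Type*} [Group D] (φ : H →* D) {x : W} (h : x ∈ H) :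
    ext φ x = φ ⟨x, h⟩ := dif_pos h

lemma ext_mul {H : Subgroup W} {D : Type*} [Group D] (φ : H →* D) {x y : W} (h : x ∈ H)
    (h' : y ∈ H) : ext φ (x * y) = ext φ x * ext φ y := by
  rw [ext_eq φ h, ext_eq φ h', ext_eq φ (H.mul_mem h h'), ← map_mul]; rfl

lemma ext_pow {H : Subgroup W} {D : Type*} [Group D] (φ : H →* D) {x : W} (h : x ∈ H) (n : ℕ) :
    ext φ (x ^ n) = ext φ x ^ n := by
  rw [ext_eq φ h, ext_eq φ (H.pow_mem h n), ← map_pow]; rfl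

lemma ext_isRel {B : Set W} (h : IsRel m B (id : W → W)) {D : Type*} [Group D]
    (φ : Subgroup.closure B →* D) : IsRel m B (ext φ) := by
  intro x hx y hy
  have hx' := Subgroup.subset_closure hx
  have hy' := Subgroup.subset_closure hy
  rw [← ext_mul φ hx' hy', ← ext_pow φ (Subgroup.mul_mem _ hx' hy'), show (x * y) ^ m x y = 1 from
    h x hx y hy, ext_eq φ (Subgroup.one_mem _)]
  exact map_one φ

lemma ext_range {B : Set W} {D : Type*} [Group D] (φ : Subgroup.closure B →* D) :
    φ.range = Subgroup.closure (ext φ '' B) := by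
  have h1 : Subgroup.closure ((Subtype.val : Subgroup.closure B → W) ⁻¹' B) = ⊤ :=
    Subgroup.closure_closure_coe_preimage
  rw [MonoidHom.range_eq_map, ← h1, MonoidHom.map_closure]
  congr 1
  ext d
  constructor
  · rintro ⟨x, hx, rfl⟩; exact ⟨x, hx, ext_eq φ x.2⟩
  · rintro ⟨x, hx, rfl⟩
    exact ⟨⟨x, Subgroup.subset_closure hx⟩, hx, (ext_eq φ _).symm⟩

lemma comm_of_closure {D : Type*} [Group D] {X : Set D} (h : ∀ x ∈ X, ∀ y ∈ X, x * y = y * x) :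
    ∀ x ∈ Subgroup.closure X, ∀ y ∈ Subgroup.closure X, x * y = y * x := by
  intro x hx y hy
  have h1 : Subgroup.closure X ≤ Subgroup.centralizer X := by
    rw [Subgroup.closure_le]
    intro x hx
    exact Subgroup.mem_centralizer_iff.2 fun y hy => h y hy x hx
  have h2 : Subgroup.closure X ≤ Subgroup.centralizer (Subgroup.closure X : Set D) := by
    rw [Subgroup.closure_le]
    intro x hx
    refine Subgroup.mem_centralizer_iff.2 fun y hy => ?_
    exact (Subgroup.mem_centralizer_iff.1 (h1 hy) x hx).symm
  exact (Subgroup.mem_centralizer_iff.1 (h2 hx) y hy).symm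

lemma ext_commutator {B : Set W} {D : Type*} [Group D] (φ : Subgroup.closure B →* D)
    (h : ∀ p ∈ B, ∀ q ∈ B, ext φ p * ext φ q = ext φ q * ext φ p) {x : W}
    (hx : x ∈ (⁅Subgroup.closure B, Subgroup.closure B⁆ : Subgroup W)) : ext φ x = 1 := by
  have hc : ∀ y z, φ y * φ z = φ z * φ y := by
    intro y z
    have hy : φ y ∈ φ.range := ⟨y, rfl⟩
    have hz : φ z ∈ φ.range := ⟨z, rfl⟩
    rw [ext_range] at hy hz
    refine comm_of_closure ?_ _ hy _ hz
    rintro _ ⟨p, hp, rfl⟩ _ ⟨q, hq, rfl⟩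
    exact h p hp q hq
  have h1 : (⁅Subgroup.closure B, Subgroup.closure B⁆ : Subgroup W) =
      Subgroup.map (Subgroup.closure B).subtype
        (⁅(⊤ : Subgroup (Subgroup.closure B)), ⊤⁆ : Subgroup (Subgroup.closure B)) := by
    rw [Subgroup.map_commutator, ← MonoidHom.range_eq_map, Subgroup.range_subtype]
  rw [h1] at hx
  obtain ⟨y, hy, rfl⟩ := hx
  have h2 : (⁅(⊤ : Subgroup (Subgroup.closure B)), ⊤⁆ : Subgroup (Subgroup.closure B)) ≤ φ.ker := by
    rw [Subgroup.commutator_le]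
    intro p _ q _
    rw [MonoidHom.mem_ker, commutatorElement_def, map_mul, map_mul, map_mul, hc p q, map_inv,
      map_inv, mul_inv_cancel_right, mul_inv_cancel]
  rw [Subgroup.subtype_apply, ext_eq φ y.2]
  exact h2 hy

lemma sq_swap {D : Type*} [Group D] {x y : D} (hx : x * x = 1) (hy : y * y = 1) {n : ℕ}
    (h : (x * y) ^ n = 1) : (y * x) ^ n = 1 := by
  have h1 : y * x = (x * y)⁻¹ := by
    rw [mul_inv_rev, mul_eq_one_iff_inv_eq.1 hx, mul_eq_one_iff_inv_eq.1 hy]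
  rw [h1, inv_pow, h, inv_one]

lemma aux_A3 : ∀ i j, i ≠ j → aMat 3 i j = 2 → ∃ k, aMat 3 i k = 3 ∧ aMat 3 k j = 3 := by decide
lemma aux_B4 : ∀ i j, i ≠ j → bMat 4 i j = 2 → ∃ k, bMat 4 i k = 3 ∧ bMat 4 k j = 3 := by decide
lemma aux_C3 : ∀ i j, cMat 3 i j = 4 → ∃ k, (cMat 3 k i = 3 ∧ cMat 3 k j = 2) ∨
    (cMat 3 k j = 3 ∧ cMat 3 k i = 2) := by decide
lemma aux_F4 : ∀ i j, f4Mat i j = 4 → ∃ k, (f4Mat k i = 3 ∧ f4Mat k j = 2) ∨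
    (f4Mat k j = 3 ∧ f4Mat k i = 2) := by decide

/-- The generators of `N(⟨B⟩)` are killed by all homomorphisms from `⟨B⟩` to generalized dihedral
groups. -/
lemma inRad_of_genSetNB {B : Set W} (hrel : IsRel m B (id : W → W)) (h : PosDiag m B)
    (hconn : Conn m B) {x : W} (hx : x ∈ genSetNB m B) : InRad (Subgroup.closure B) x := by
  have hsub : B ⊆ Subgroup.closure B := Subgroup.subset_closure
  have hmul : ∀ u ∈ B, ∀ v ∈ B, u * v ∈ Subgroup.closure B := fun u hu v hv =>
    Subgroup.mul_mem _ (hsub hu) (hsub hv)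
  suffices H : x ∈ Subgroup.closure B ∧ ∀ (D : Type u) [Group D] (R : Subgroup D), IsRot R →
      ∀ φ : Subgroup.closure B →* D, ext φ x = 1 from
    ⟨H.1, fun D _ ⟨R, hR⟩ φ => by rw [← ext_eq φ H.1]; exact H.2 D R hR φ⟩
  -- common treatment of the two kinds of generators outside the commutator case
  have hA : ∀ u ∈ B, ∀ v ∈ B, m u v = 2 → (∃ p ∈ B, m u p = 3 ∧ m p v = 3) →
      u * v ∈ Subgroup.closure B ∧ ∀ (D : Type u) [Group D] (R : Subgroup D), IsRot R →
      ∀ φ : Subgroup.closure B →* D, ext φ (u * v) = 1 := by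
    rintro u hu v hv huv ⟨p, hp, hup, hpv⟩
    refine ⟨hmul u hu v hv, fun D _ R hR φ => ?_⟩
    have hg := ext_isRel hrel φ
    rw [ext_mul φ (hsub hu) (hsub hv), hR.typeA3 (hg.sq h hu) (hg.sq h hp) (hg.sq h hv)
      (hg.rel hu hp hup) (hg.rel hp hv hpv) (hg.rel hu hv huv), hg.sq h hv]
  have hC : ∀ u ∈ B, ∀ v ∈ B, m u v = 4 →
      (∃ p ∈ B, (m p u = 3 ∧ m p v = 2) ∨ (m p v = 3 ∧ m p u = 2)) →
      (u * v) ^ 2 ∈ Subgroup.closure B ∧ ∀ (D : Type u) [Group D] (R : Subgroup D), IsRot R →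
      ∀ φ : Subgroup.closure B →* D, ext φ ((u * v) ^ 2) = 1 := by
    rintro u hu v hv huv ⟨p, hp, hpp⟩
    refine ⟨Subgroup.pow_mem _ (hmul u hu v hv) 2, fun D _ R hR φ => ?_⟩
    have hg := ext_isRel hrel φ
    rw [ext_pow φ (hmul u hu v hv), ext_mul φ (hsub hu) (hsub hv)]
    rcases hpp with ⟨h1, h2⟩ | ⟨h1, h2⟩
    · exact hR.typeC3 (hg.sq h hp) (hg.sq h hu) (hg.sq h hv) (hg.rel hp hu h1) (hg.rel hp hv h2)
        (hg.rel hu hv huv)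
    · exact sq_swap (hg.sq h hv) (hg.sq h hu) (hR.typeC3 (hg.sq h hp) (hg.sq h hv) (hg.sq h hu)
        (hg.rel hp hv h1) (hg.rel hp hu h2) (hg.rel hv hu ((h.symm v hv u hu).trans huv)))
  rcases hx with ⟨hcase, hx⟩ | ⟨ht, u, hu, v, hv, hne, huv, rfl⟩ |
    ⟨ht, u, hu, v, hv, hne, huv, rfl⟩ | ⟨ht, u, hu, v, hv, huv, rfl⟩ |
    ⟨ht, u, hu, p, hp, v, hv, q, hq, hup, hpv, hvq, huv, rfl⟩ | ⟨ht, u, hu, v, hv, huv, rfl⟩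
  · refine ⟨Subgroup.commutator_le_self _ hx, fun D _ R hR φ => ext_commutator φ ?_ hx⟩
    have hg := ext_isRel hrel φ
    have hall : ∀ w : D, (∀ p ∈ B, ext φ p = w) →
        ∀ p ∈ B, ∀ q ∈ B, ext φ p * ext φ q = ext φ q * ext φ p := by
      intro w hw p hp q hq
      rw [hw p hp, hw q hq]
    rcases hcase with h5 | ht | ht | ht
    · intro p hp q hq
      exact rank5_comm hR h hconn hg h5 hp hq
    · obtain ⟨f, -, rfl, hm⟩ := hasType_iff.1 ht
      obtain ⟨h1, h2, h3⟩ := rel_path333 hR h hg (Set.mem_range_self 0) (Set.mem_range_self 1)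
        (Set.mem_range_self 2) (Set.mem_range_self 3) (by simp only [IsPath4, hm]; decide)
      refine hall (ext φ (f 0)) ?_
      rintro _ ⟨i, rfl⟩
      fin_cases i
      exacts [rfl, h1.symm, (h1.trans h2).symm, (h1.trans (h2.trans h3)).symm]
    · obtain ⟨f, -, rfl, hm⟩ := hasType_iff.1 ht
      obtain ⟨h1, h2⟩ := hR.typeH3 (hg.sq h (Set.mem_range_self 0)) (hg.sq h (Set.mem_range_self 1))
        (hg.sq h (Set.mem_range_self 2)) (hg.rel (Set.mem_range_self 0) (Set.mem_range_self 1)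
        (hm 0 1)) (hg.rel (Set.mem_range_self 1) (Set.mem_range_self 2) (hm 1 2))
        (hg.rel (Set.mem_range_self 0) (Set.mem_range_self 2) (hm 0 2))
      refine hall (ext φ (f 0)) ?_
      rintro _ ⟨i, rfl⟩
      fin_cases i
      exacts [rfl, h1.symm, (h1.trans h2).symm]
    · obtain ⟨f, -, rfl, hm⟩ := hasType_iff.1 ht
      obtain ⟨h1, h2, h3⟩ := rel_path335 hR h hg (Set.mem_range_self 0) (Set.mem_range_self 1)
        (Set.mem_range_self 2) (Set.mem_range_self 3) (by simp only [IsPath4, hm]; decide)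
      refine hall (ext φ (f 0)) ?_
      rintro _ ⟨i, rfl⟩
      fin_cases i
      exacts [rfl, h1.symm, (h1.trans h2).symm, (h1.trans (h2.trans h3)).symm]
  · obtain ⟨f, -, rfl, hm⟩ := hasType_iff.1 ht
    obtain ⟨i, rfl⟩ := hu
    obtain ⟨j, rfl⟩ := hv
    obtain ⟨k, h1, h2⟩ := aux_A3 i j (fun e => hne (e ▸ rfl)) (hm i j ▸ huv)
    exact hA _ ⟨i, rfl⟩ _ ⟨j, rfl⟩ huv ⟨f k, ⟨k, rfl⟩, (hm _ _).trans h1, (hm _ _).trans h2⟩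
  · obtain ⟨f, -, rfl, hm⟩ := hasType_iff.1 ht
    obtain ⟨i, rfl⟩ := hu
    obtain ⟨j, rfl⟩ := hv
    obtain ⟨k, h1, h2⟩ := aux_B4 i j (fun e => hne (e ▸ rfl)) (hm i j ▸ huv)
    exact hA _ ⟨i, rfl⟩ _ ⟨j, rfl⟩ huv ⟨f k, ⟨k, rfl⟩, (hm _ _).trans h1, (hm _ _).trans h2⟩
  · obtain ⟨f, -, rfl, hm⟩ := hasType_iff.1 ht
    obtain ⟨i, rfl⟩ := hu
    obtain ⟨j, rfl⟩ := hv
    obtain ⟨k, hk⟩ := aux_C3 i j (hm i j ▸ huv)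
    refine hC _ ⟨i, rfl⟩ _ ⟨j, rfl⟩ huv ⟨f k, ⟨k, rfl⟩, ?_⟩
    rw [hm, hm]; exact hk
  · exact hA u hu v hv huv ⟨p, hp, hup, hpv⟩
  · obtain ⟨f, -, rfl, hm⟩ := hasType_iff.1 ht
    obtain ⟨i, rfl⟩ := hu
    obtain ⟨j, rfl⟩ := hv
    obtain ⟨k, hk⟩ := aux_F4 i j (hm i j ▸ huv)
    refine hC _ ⟨i, rfl⟩ _ ⟨j, rfl⟩ huv ⟨f k, ⟨k, rfl⟩, ?_⟩
    rw [hm, hm]; exact hk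

lemma IsRel.mono {X D : Type*} [Group D] {m : X → X → ℕ} {B C : Set X} {g : X → D}
    (h : IsRel m C g) (hB : B ⊆ C) : IsRel m B g := fun x hx y hy => h x (hB hx) y (hB hy)

theorem NW_le_dihRad (hS : Sys m S) : NWSubgroup m S ≤ dihRad W := by
  rw [NWSubgroup]
  have : (dihRad W).Normal := Subgroup.normalClosure_normal
  refine Subgroup.normalClosure_le_normal ?_
  rintro x ⟨B, hB, -, y, hy, rfl⟩
  obtain ⟨hBS, hirr, hBf, -, -⟩ := hB
  have hle : Subgroup.normalClosure ((fun x : Subgroup.closure B => (x : W)) ⁻¹' genSetNB m B) ≤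
      (dihRad W).comap (Subgroup.closure B).subtype := by
    have : ((dihRad W).comap (Subgroup.closure B).subtype).Normal :=
      Subgroup.Normal.comap ‹_› _
    refine Subgroup.normalClosure_le_normal fun z hz => ?_
    exact Subgroup.subset_normalClosure ⟨_, hBf, inRad_of_genSetNB (hS.rel.mono hBS)
      (hS.posDiag B hBS hBf) (conn_of_isIrreducibleOn hirr) hz⟩
  exact hle hy

end Upper

end CoxRep

/-! ### Quotients without killed elements -/

namespace CoxRep

universe u

section DihQuot

variable {Q : Type u} [Group Q]

/-- The element `q` is killed by all homomorphisms to generalized dihedral groups. -/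
def Killed (q : Q) : Prop := ∀ (D : Type u) [Group D], GenDih D → ∀ ψ : Q →* D, ψ q = 1

lemma Killed.eq_one {q : Q} (hq : Killed q) (h : GenDih Q) : q = 1 := hq Q h (MonoidHom.id Q)

/-- The element `c` commutes with `x` and `b`; hence `c` is a power of `x * (b * c)` as soon as
`x * b` has order dividing three. -/
lemma three_gen {x b c : Q} (hc : c * c = 1) (hxc : x * c = c * x) (hbc : b * c = c * b)
    (hxb : (x * b) ^ 3 = 1) :
    b ∈ Subgroup.closure {x, b * c} ∧ c ∈ Subgroup.closure {x, b * c} := by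
  have h1 : Commute (x * b) c := Commute.mul_left hxc hbc
  have h2 : (x * (b * c)) ^ 3 = c := by
    rw [← mul_assoc, h1.mul_pow, hxb, one_mul, pow_succ, pow_two, hc, one_mul]
  have hx : x ∈ Subgroup.closure {x, b * c} := Subgroup.subset_closure (by simp)
  have hy : b * c ∈ Subgroup.closure {x, b * c} := Subgroup.subset_closure (by simp)
  have hcm : c ∈ Subgroup.closure {x, b * c} := by
    have := Subgroup.pow_mem _ (Subgroup.mul_mem _ hx hy) 3
    rwa [h2] at this
  exact ⟨by simpa using Subgroup.mul_mem _ hy (Subgroup.inv_mem _ hcm), hcm⟩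

/-- The centre of the group generated by two distinct involutions whose product has order three is
trivial. -/
lemma eq_one_or_eq {a b q : Q} (ha : a * a = 1) (hb : b * b = 1) (hab : (a * b) ^ 3 = 1)
    (hq : q ∈ Subgroup.closure {a, b}) (hqa : q * a = a * q) (hqb : q * b = b * q) :
    q = 1 ∨ a = b := by
  have ha' : ∀ y, a * (a * y) = y := fun y => by rw [← mul_assoc, ha, one_mul]
  have hb' : ∀ y, b * (b * y) = y := fun y => by rw [← mul_assoc, hb, one_mul]
  have e1 : b * (a * b) = a * (b * a) := by
    have h1 : a * (b * (a * (b * (a * b)))) = 1 := by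
      rw [← hab]; simp only [pow_succ, pow_zero, one_mul, mul_assoc]
    have h2 := congrArg (fun y => a * (b * (a * y))) h1
    simp only [ha', hb', mul_one] at h2
    exact h2
  have fin : a * b = b * a → a = b := fun h => eq_of_comm_odd ha hb hab (by decide) h
  have e2 : b * (a * (b * a)) = a * b := by
    rw [← e1, hb']
  have key : q = 1 ∨ q = a ∨ q = b ∨ q = a * b ∨ q = b * a ∨ q = a * (b * a) := by
    have step : ∀ g : Q, (g = a ∨ g = b) → ∀ y, (y = 1 ∨ y = a ∨ y = b ∨ y = a * b ∨ y = b * a ∨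
        y = a * (b * a)) → (g * y = 1 ∨ g * y = a ∨ g * y = b ∨ g * y = a * b ∨ g * y = b * a ∨
        g * y = a * (b * a)) := by
      rintro g (rfl | rfl) y (rfl | rfl | rfl | rfl | rfl | rfl)
      all_goals simp [ha, hb, ha', hb', e1, e2]
    clear hqa hqb
    induction hq using Subgroup.closure_induction_left with
    | one => exact Or.inl rfl
    | mul_left x hx y _ ih => exact step x hx y ih
    | inv_mul_cancel x hx y _ ih =>
      have : x⁻¹ = x := by
        rcases hx with rfl | rfl
        exacts [mul_eq_one_iff_inv_eq.1 ha, mul_eq_one_iff_inv_eq.1 hb]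
      rw [this]; exact step x hx y ih
  rcases key with rfl | rfl | rfl | rfl | rfl | rfl
  · exact Or.inl rfl
  · exact Or.inr (fin hqb)
  · exact Or.inr (fin hqa.symm)
  · refine Or.inr (fin ?_)
    have h2 := congrArg (a * ·) hqa
    simp only [mul_assoc, ha'] at h2
    exact h2.symm
  · refine Or.inr (fin ?_)
    have h2 := congrArg (b * ·) hqb
    simp only [mul_assoc, hb'] at h2
    exact h2
  · refine Or.inr (fin ?_)
    have h2 := hqa
    simp only [mul_assoc, ha', ha, mul_one] at h2
    exact h2

/-- If the group is generated by two commuting subgroups `⟨a, b⟩` and `⟨c, d⟩`, the killed elements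
lie in `⟨a, b⟩`, because the quotient by it is generated by the two involutions `c` and `d`. -/
lemma killed_mem {a b c d q : Q} (hgen : Subgroup.closure {a, b, c, d} = ⊤)
    (hc : c * c = 1) (hd : d * d = 1) (hac : a * c = c * a) (had : a * d = d * a)
    (hbc : b * c = c * b) (hbd : b * d = d * b) (hq : Killed q) :
    q ∈ Subgroup.closure {a, b} := by
  have hnorm : (Subgroup.closure {a, b}).Normal := by
    rw [← Subgroup.normalizer_eq_top_iff, ← top_le_iff, ← hgen, Subgroup.closure_le]
    have hcent : ∀ z, a * z = z * a → b * z = z * b →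
        z ∈ Subgroup.normalizer (Subgroup.closure {a, b} : Set Q) := by
      intro z hza hzb
      have h1 : Subgroup.closure {a, b} ≤ Subgroup.centralizer {z} := by
        rw [Subgroup.closure_le]
        rintro x (rfl | rfl)
        · exact Subgroup.mem_centralizer_iff.2 (by rintro _ rfl; exact hza.symm)
        · exact Subgroup.mem_centralizer_iff.2 (by rintro _ rfl; exact hzb.symm)
      have h2 : ∀ x ∈ Subgroup.closure {a, b}, z * x * z⁻¹ = x := fun x hx => by
        rw [Subgroup.mem_centralizer_iff.1 (h1 hx) z rfl, mul_inv_cancel_right]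
      refine Subgroup.mem_normalizer_iff.2 fun x => ⟨fun hx => ?_, fun hx => ?_⟩
      · exact (h2 x hx).symm ▸ hx
      · have h3 := h2 _ hx
        have h4 : z * x * z⁻¹ = x := by
          have := congrArg (fun y => z⁻¹ * y * z) h3
          simpa [mul_assoc] using this
        exact h4 ▸ hx
    rintro x (rfl | rfl | rfl | rfl)
    · exact Subgroup.le_normalizer (Subgroup.subset_closure (by simp))
    · exact Subgroup.le_normalizer (Subgroup.subset_closure (by simp))
    · exact hcent _ hac hbc
    · exact hcent _ had hbd
  set A := Subgroup.closure {a, b} with hA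
  have h1 := hq (Q ⧸ A) ?_ (QuotientGroup.mk' A)
  · exact (QuotientGroup.eq_one_iff q).1 h1
  have hone : ∀ z ∈ A, QuotientGroup.mk' A z = 1 := fun z hz => (QuotientGroup.eq_one_iff z).2 hz
  refine genDih_of_two (a := QuotientGroup.mk' A c) (b := QuotientGroup.mk' A d) ?_ ?_ ?_
  · rw [← map_mul, hc, map_one]
  · rw [← map_mul, hd, map_one]
  · have h2 : (Subgroup.closure {a, b, c, d}).map (QuotientGroup.mk' A) = ⊤ := by
      rw [hgen]; exact Subgroup.map_top_of_surjective _ (QuotientGroup.mk'_surjective A)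
    rw [MonoidHom.map_closure] at h2
    rw [eq_top_iff, ← h2, Subgroup.closure_le]
    rintro _ ⟨x, rfl | rfl | rfl | rfl, rfl⟩
    · rw [hone x (Subgroup.subset_closure (by simp))]; exact Subgroup.one_mem _
    · rw [hone x (Subgroup.subset_closure (by simp))]; exact Subgroup.one_mem _
    · exact Subgroup.subset_closure (by simp)
    · exact Subgroup.subset_closure (by simp)

/-- A product of two commuting quotients of the symmetric group of degree three has no nontrivial
element killed by all homomorphisms to generalized dihedral groups. -/
lemma killed_F4 {a b c d q : Q} (hgen : Subgroup.closure {a, b, c, d} = ⊤)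
    (ha : a * a = 1) (hb : b * b = 1) (hc : c * c = 1) (hd : d * d = 1)
    (hab : (a * b) ^ 3 = 1) (hcd : (c * d) ^ 3 = 1) (hac : a * c = c * a) (had : a * d = d * a)
    (hbc : b * c = c * b) (hbd : b * d = d * b) (hq : Killed q) : q = 1 := by
  have h1 := killed_mem hgen hc hd hac had hbc hbd hq
  have hgen' : Subgroup.closure {c, d, a, b} = ⊤ := by
    rw [← hgen]; congr 1; ext x; simp only [Set.mem_insert_iff, Set.mem_singleton_iff]; tauto
  have h2 := killed_mem hgen' ha hb hac.symm hbc.symm had.symm hbd.symm hq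
  have comm : ∀ {x y z : Q}, x * z = z * x → y * z = z * y → ∀ w ∈ Subgroup.closure {x, y},
      w * z = z * w := by
    intro x y z hx hy w hw
    have h1 : Subgroup.closure {x, y} ≤ Subgroup.centralizer {z} := by
      rw [Subgroup.closure_le]
      rintro x (rfl | rfl)
      · exact Subgroup.mem_centralizer_iff.2 (by rintro _ rfl; exact hx.symm)
      · exact Subgroup.mem_centralizer_iff.2 (by rintro _ rfl; exact hy.symm)
    exact (Subgroup.mem_centralizer_iff.1 (h1 hw) z rfl).symm
  rcases eq_one_or_eq ha hb hab h1 (comm hac.symm had.symm q h2) (comm hbc.symm hbd.symm q h2) with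
    h3 | rfl
  · exact h3
  rcases eq_one_or_eq hc hd hcd h2 (comm hac hac q h1) (comm had had q h1) with h3 | rfl
  · exact h3
  refine hq.eq_one (genDih_of_two ha hc ?_)
  rw [← hgen]; congr 1; ext x; simp

end DihQuot

end CoxRep

/-! ### Recognizing the types of rank three and four -/

namespace CoxRep

universe u

section Recognise

variable {X : Type*} {m : X → X → ℕ} {B : Set X}

lemma PosDiag.adj_of (h : PosDiag m B) {x y : X} (hx : x ∈ B) (hxy : 3 ≤ m x y) :
    PosDiag.Adj m x y := by
  refine ⟨?_, by omega⟩
  rintro rfl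
  rw [h.self x hx] at hxy
  omega

/-- A positive definite connected diagram on three vertices is a path with labels `3` and
`3`, `4` or `5`. -/
lemma PosDiag.three (h : PosDiag m B) (hconn : Conn m B) (hB : B.ncard = 3) :
    ∃ a b c, B = {a, b, c} ∧ a ≠ b ∧ a ≠ c ∧ b ≠ c ∧ m a b = 3 ∧ m a c = 2 ∧
      (m b c = 3 ∨ m b c = 4 ∨ m b c = 5) := by
  have hfin : B.Finite := Set.finite_of_ncard_pos (by omega)
  obtain ⟨p, hp⟩ : B.Nonempty := Set.nonempty_of_ncard_ne_zero (by omega)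
  obtain ⟨x, rfl, q, hq, -, hpq⟩ := hconn {p} (by simpa using hp) ⟨p, rfl⟩
    (by rintro rfl; rw [Set.ncard_singleton] at hB; omega)
  obtain ⟨a, ha, b, hb, c, hc, hab, hbc, hac, -⟩ := h.exists_adj_third hconn hp hq hpq
    (by rintro rfl; rw [Set.ncard_pair hpq.1] at hB; omega)
  have hset : ({a, b, c} : Set X) = B := by
    refine Set.eq_of_subset_of_ncard_le (by rintro x (rfl | rfl | rfl) <;> assumption) ?_ hfin
    rw [hB, Set.ncard_eq_three.2 ⟨a, b, c, hab.1, hac, hbc.1, rfl⟩]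
  have h2 := h.no_triangle ha hb hc hab hbc hac
  rcases h.path3 ha hb hc hab hbc hac with ⟨h3, h4⟩ | ⟨h3, h4⟩
  · exact ⟨a, b, c, hset.symm, hab.1, hac, hbc.1, h3, h2, h4⟩
  · refine ⟨c, b, a, ?_, hbc.1.symm, hac.symm, hab.1.symm, (h.symm c hc b hb).trans h3,
      (h.symm c hc a ha).trans h2, ?_⟩
    · rw [← hset]; ext; simp only [Set.mem_insert_iff, Set.mem_singleton_iff]; tauto
    · rw [h.symm b hb a ha]; exact h4

lemma PosDiag.four (h : PosDiag m B) (hconn : Conn m B) (hB : B.ncard = 4) :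
    ∃ a b c d, B = {a, b, c, d} ∧ IsRank4 m a b c d := by
  have hfin : B.Finite := Set.finite_of_ncard_pos (by omega)
  obtain ⟨p, hp⟩ : B.Nonempty := Set.nonempty_of_ncard_ne_zero (by omega)
  obtain ⟨x, rfl, q, hq, -, hpq⟩ := hconn {p} (by simpa using hp) ⟨p, rfl⟩
    (by rintro rfl; rw [Set.ncard_singleton] at hB; omega)
  obtain ⟨a, ha, b, hb, c, hc, hab, hbc, hac, -⟩ := h.exists_adj_third hconn hp hq hpq
    (by rintro rfl; rw [Set.ncard_pair hpq.1] at hB; omega)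
  have h3 : ({a, b, c} : Set X).ncard = 3 :=
    Set.ncard_eq_three.2 ⟨a, b, c, hab.1, hac, hbc.1, rfl⟩
  obtain ⟨v, hv, hvn, p', q', r', s', hset, hr⟩ := h.exists_rank4 hconn ha hb hc hab hbc hac
    (by rintro rfl; omega)
  refine ⟨p', q', r', s', ?_, hr⟩
  rw [hset]
  symm
  refine Set.eq_of_subset_of_ncard_le (by rintro x (rfl | rfl | rfl | rfl) <;> assumption) ?_ hfin
  have h4 : ({a, b, c, v} : Set X) = insert v {a, b, c} := by
    ext; simp only [Set.mem_insert_iff, Set.mem_singleton_iff]; tauto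
  rw [hB, h4, Set.ncard_insert_of_notMem hvn, h3]

lemma PosDiag.hasType {W : Type*} {m : W → W → ℕ} {B : Set W} (h : PosDiag m B)
    {n : ℕ} {std : Fin n → Fin n → ℕ} (f : Fin n → W) (hf : Function.Injective f)
    (hB : B = Set.range f) (hself : ∀ i, std i i = 1) (hsymm : ∀ i j, std i j = std j i)
    (hlt : ∀ i j, i < j → m (f i) (f j) = std i j) : HasType m B std := by
  refine hasType_iff.2 ⟨f, hf, hB.symm, fun i j => ?_⟩
  have hmem : ∀ i, f i ∈ B := fun i => hB ▸ ⟨i, rfl⟩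
  rcases lt_trichotomy i j with hij | rfl | hij
  · exact hlt i j hij
  · rw [h.self _ (hmem i), hself]
  · rw [h.symm _ (hmem i) _ (hmem j), hlt j i hij, hsymm]

lemma PosDiag.hasType3 {W : Type*} {m : W → W → ℕ} {B : Set W} (h : PosDiag m B)
    {std : Fin 3 → Fin 3 → ℕ} {a b c : W} (hB : B = {a, b, c}) (hab : a ≠ b) (hac : a ≠ c)
    (hbc : b ≠ c) (hself : ∀ i, std i i = 1) (hsymm : ∀ i j, std i j = std j i)
    (h01 : m a b = std 0 1) (h02 : m a c = std 0 2) (h12 : m b c = std 1 2) :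
    HasType m B std := by
  refine h.hasType ![a, b, c] ?_ ?_ hself hsymm ?_
  · intro i j hij
    fin_cases i <;> fin_cases j <;> simp_all
  · rw [hB]; ext x; simp [eq_comm]; tauto
  · intro i j hij
    fin_cases i <;> fin_cases j <;> first | exact absurd hij (by decide) | assumption

lemma PosDiag.hasType4 {W : Type*} {m : W → W → ℕ} {B : Set W} (h : PosDiag m B)
    {std : Fin 4 → Fin 4 → ℕ} {a b c d : W} (hB : B = {a, b, c, d})
    (hself : ∀ i, std i i = 1) (hsymm : ∀ i j, std i j = std j i)
    (hne : ∀ i j, i < j → std i j ≠ 1)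
    (h01 : m a b = std 0 1) (h02 : m a c = std 0 2) (h03 : m a d = std 0 3)
    (h12 : m b c = std 1 2) (h13 : m b d = std 1 3) (h23 : m c d = std 2 3) :
    HasType m B std := by
  have hrange : B = Set.range ![a, b, c, d] := by
    rw [hB]; ext x; simp [eq_comm]; tauto
  have hlt : ∀ i j, i < j → m (![a, b, c, d] i) (![a, b, c, d] j) = std i j := by
    intro i j hij
    fin_cases i <;> fin_cases j <;> first | exact absurd hij (by decide) | assumption
  refine h.hasType ![a, b, c, d] ?_ hrange hself hsymm hlt
  intro i j hij
  by_contra hcon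
  rcases lt_or_gt_of_ne hcon with hl | hl
  · have := hlt i j hl
    rw [hij, h.self _ (hrange ▸ ⟨j, rfl⟩)] at this
    exact hne i j hl this.symm
  · have := hlt j i hl
    rw [← hij, h.self _ (hrange ▸ ⟨i, rfl⟩)] at this
    exact hne j i hl this.symm

end Recognise

end CoxRep

/-! ### `N(⟨B⟩)` contains the killed elements -/

namespace CoxRep

universe u

section Lower

variable {W : Type u} [Group W] {m : W → W → ℕ} {S : Set W}

/-- For irreducible finite `⟨B⟩` of rank at least three, `N(⟨B⟩)` contains every element of `⟨B⟩`
killed by all homomorphisms to generalized dihedral groups: the quotient of `⟨B⟩` by `N(⟨B⟩)` is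
generated by at most two involutions, except in type `F₄`. -/
lemma mem_NBSubgroup {B : Set W} (hrel : IsRel m B (id : W → W)) (h : PosDiag m B)
    (hconn : Conn m B) (h3 : 3 ≤ B.ncard) {x : W} (hx : InRad (Subgroup.closure B) x) :
    x ∈ NBSubgroup m B := by
  obtain ⟨hxK, hrad⟩ := hx
  set N : Subgroup (Subgroup.closure B) :=
    Subgroup.normalClosure ((fun x : Subgroup.closure B => (x : W)) ⁻¹' genSetNB m B) with hN
  set π := QuotientGroup.mk' N with hπ
  suffices H : π ⟨x, hxK⟩ = 1 from ⟨⟨x, hxK⟩, (QuotientGroup.eq_one_iff _).1 H, rfl⟩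
  have hq : Killed (π ⟨x, hxK⟩) := fun D _ hD ψ => hrad D hD (ψ.comp π)
  set g := ext π with hgdef
  have hg : IsRel m B g := ext_isRel hrel π
  have hsub : B ⊆ Subgroup.closure B := Subgroup.subset_closure
  have hgen : Subgroup.closure (g '' B) = ⊤ := by
    rw [hgdef, ← ext_range, MonoidHom.range_eq_top]
    exact QuotientGroup.mk'_surjective N
  have hkill : ∀ y, y ∈ Subgroup.closure B → y ∈ genSetNB m B → g y = 1 := by
    intro y hy hyg
    rw [hgdef, ext_eq π hy]
    exact (QuotientGroup.eq_one_iff _).2 (Subgroup.subset_normalClosure hyg)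
  have hgm : ∀ {u v : W}, u ∈ B → v ∈ B → g (u * v) = g u * g v := fun hu hv =>
    ext_mul π (hsub hu) (hsub hv)
  have hmul : ∀ {u v : W}, u ∈ B → v ∈ B → u * v ∈ Subgroup.closure B := fun hu hv =>
    Subgroup.mul_mem _ (hsub hu) (hsub hv)
  have hab : (5 ≤ B.ncard ∨ HasType m B (aMat 4) ∨ HasType m B g3Mat ∨ HasType m B g4Mat) →
      π ⟨x, hxK⟩ = 1 := by
    intro hc
    refine hq.eq_one (genDih_of_comm ?_)
    have hcomm : ∀ u ∈ g '' B, ∀ v ∈ g '' B, u * v = v * u := by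
      rintro _ ⟨p, hp, rfl⟩ _ ⟨q, hq, rfl⟩
      have h1 : p * q * p⁻¹ * q⁻¹ ∈ (⁅Subgroup.closure B, Subgroup.closure B⁆ : Subgroup W) :=
        Subgroup.commutator_mem_commutator (hsub hp) (hsub hq)
      have h2 := hkill _ (Subgroup.commutator_le_self _ h1) (Or.inl ⟨hc, h1⟩)
      have h3 : p * q = p * q * p⁻¹ * q⁻¹ * (q * p) := by group
      rw [← hgm hp hq, ← hgm hq hp]
      calc g (p * q) = g (p * q * p⁻¹ * q⁻¹ * (q * p)) := by rw [← h3]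
        _ = g (p * q * p⁻¹ * q⁻¹) * g (q * p) :=
          ext_mul π (Subgroup.commutator_le_self _ h1) (hmul hq hp)
        _ = g (q * p) := by rw [h2, one_mul]
    intro u v
    exact comm_of_closure hcomm u (hgen ▸ Subgroup.mem_top u) v (hgen ▸ Subgroup.mem_top v)
  have htwo : ∀ u v, u * u = 1 → v * v = 1 → (∀ p ∈ B, g p ∈ Subgroup.closure {u, v}) →
      π ⟨x, hxK⟩ = 1 := by
    intro u v hu hv huv
    refine hq.eq_one (genDih_of_two hu hv ?_)
    rw [eq_top_iff, ← hgen, Subgroup.closure_le]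
    rintro _ ⟨p, hp, rfl⟩
    exact huv p hp
  -- the quotient is generated by the images of `a` and of the product of `b` and `c`
  have hthree : ∀ {a b c : W}, a ∈ B → b ∈ B → c ∈ B → m a b = 3 → m a c = 2 →
      g b * g c = g c * g b → (∀ p ∈ B, g p = g a ∨ g p = g b ∨ g p = g c) →
      π ⟨x, hxK⟩ = 1 := by
    intro a b c ha hb hc h1 h2 h3 hall
    obtain ⟨e1, e2⟩ := three_gen (hg.sq h hc) (hg.comm h ha hc h2) h3 (hg.rel ha hb h1)
    refine htwo (g a) (g b * g c) (hg.sq h ha) ?_ fun p hp => ?_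
    · nth_rewrite 2 [h3]
      rw [mul_assoc, ← mul_assoc (g c), hg.sq h hc, one_mul, hg.sq h hb]
    · rcases hall p hp with e | e | e <;> rw [e]
      exacts [Subgroup.subset_closure (by simp), e1, e2]
  have hcomm2 : ∀ {u v : W}, u ∈ B → v ∈ B → (g u * g v) ^ 2 = 1 → g u * g v = g v * g u := by
    intro u v hu hv h2
    rw [pow_two] at h2
    have h3 := mul_eq_one_iff_inv_eq.1 h2
    rw [mul_inv_rev, mul_eq_one_iff_inv_eq.1 (hg.sq h hu),
      mul_eq_one_iff_inv_eq.1 (hg.sq h hv)] at h3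
    exact h3.symm
  have heq : ∀ {u v : W}, u ∈ B → v ∈ B → u * v ∈ genSetNB m B → g u = g v := by
    intro u v hu hv huv
    exact eq_of_mul_eq_one (hg.sq h hv) (by rw [← hgm hu hv]; exact hkill _ (hmul hu hv) huv)
  have hsq : ∀ {u v : W}, u ∈ B → v ∈ B → (u * v) ^ 2 ∈ genSetNB m B →
      g u * g v = g v * g u := by
    intro u v hu hv huv
    refine hcomm2 hu hv ?_
    rw [← hgm hu hv, hgdef, ← ext_pow π (hmul hu hv)]
    exact hkill _ (Subgroup.pow_mem _ (hmul hu hv) 2) huv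
  obtain h5 | h4 | h3 : 5 ≤ B.ncard ∨ B.ncard = 4 ∨ B.ncard = 3 := by omega
  · exact hab (Or.inl h5)
  · obtain ⟨a, b, c, d, hB, hr⟩ := h.four hconn h4
    have ha : a ∈ B := by simp [hB]
    have hb : b ∈ B := by simp [hB]
    have hc : c ∈ B := by simp [hB]
    have hd : d ∈ B := by simp [hB]
    rcases hr with hr | hr | hr | hr | hr
    · obtain ⟨h01, h12, h23, h02, h13, h03⟩ := hr
      exact hab (Or.inr (Or.inl (h.hasType4 hB (by decide) (by decide) (by decide)
        h01 h02 h03 h12 h13 h23)))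
    · obtain ⟨h01, h12, h23, h02, h13, h03⟩ := hr
      exact hab (Or.inr (Or.inr (Or.inr (h.hasType4 hB (by decide) (by decide) (by decide)
        h01 h02 h03 h12 h13 h23))))
    · obtain ⟨h01, h12, h23, h02, h13, h03⟩ := hr
      have ht : HasType m B (cMat 4) := h.hasType4 hB (by decide) (by decide) (by decide)
        h01 h02 h03 h12 h13 h23
      have e : g a = g c := heq ha hc (Or.inr (Or.inr (Or.inr (Or.inr (Or.inl ⟨ht, a, ha, b, hb,
        c, hc, d, hd, h01, h12, h23, h02, rfl⟩)))))
      refine hthree ha hb hd h01 h03 (hg.comm h hb hd h13) ?_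
      intro p hp
      rw [hB] at hp
      rcases hp with rfl | rfl | rfl | rfl
      exacts [Or.inl rfl, Or.inr (Or.inl rfl), Or.inl e.symm, Or.inr (Or.inr rfl)]
    · obtain ⟨h01, h12, h23, h02, h13, h03⟩ := hr
      have ht : HasType m B f4Mat := h.hasType4 hB (by decide) (by decide) (by decide)
        h01 h02 h03 h12 h13 h23
      have e := hsq hb hc (Or.inr (Or.inr (Or.inr (Or.inr (Or.inr ⟨ht, b, hb, c, hc, h12, rfl⟩)))))
      refine killed_F4 (a := g a) (b := g b) (c := g c) (d := g d) ?_ (hg.sq h ha) (hg.sq h hb)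
        (hg.sq h hc) (hg.sq h hd) (hg.rel ha hb h01) (hg.rel hc hd h23) (hg.comm h ha hc h02)
        (hg.comm h ha hd h03) e (hg.comm h hb hd h13) hq
      have hgB : g '' B = g '' {a, b, c, d} := congrArg (g '' ·) hB
      rw [← hgen, hgB]
      simp only [Set.image_insert_eq, Set.image_singleton]
    · obtain ⟨h10, h12, h13, h02, h03, h23⟩ := hr
      have ht : HasType m B (bMat 4) := h.hasType4 hB (by decide) (by decide) (by decide)
        ((h.symm a ha b hb).trans h10) h02 h03 h12 h13 h23
      have hne : ∀ {u v}, u ∈ B → m u v = 2 → u ≠ v := by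
        rintro u v hu huv rfl
        rw [h.self u hu] at huv; omega
      have e : g a = g c := heq ha hc (Or.inr (Or.inr (Or.inl ⟨ht, a, ha, c, hc, hne ha h02, h02,
        rfl⟩)))
      have e' : g a = g d := heq ha hd (Or.inr (Or.inr (Or.inl ⟨ht, a, ha, d, hd, hne ha h03, h03,
        rfl⟩)))
      refine htwo (g a) (g b) (hg.sq h ha) (hg.sq h hb) ?_
      intro p hp
      rw [hB] at hp
      rcases hp with rfl | rfl | rfl | rfl
      exacts [Subgroup.subset_closure (by simp), Subgroup.subset_closure (by simp),
        e ▸ Subgroup.subset_closure (by simp), e' ▸ Subgroup.subset_closure (by simp)]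
  · obtain ⟨a, b, c, hB, n1, n2, n3, h01, h02, h12⟩ := h.three hconn h3
    have ha : a ∈ B := by simp [hB]
    have hb : b ∈ B := by simp [hB]
    have hc : c ∈ B := by simp [hB]
    rcases h12 with h12 | h12 | h12
    · have ht : HasType m B (aMat 3) := h.hasType3 hB n1 n2 n3 (by decide) (by decide) h01 h02 h12
      have e : g a = g c := heq ha hc (Or.inr (Or.inl ⟨ht, a, ha, c, hc, n2, h02, rfl⟩))
      refine htwo (g a) (g b) (hg.sq h ha) (hg.sq h hb) ?_
      intro p hp
      rw [hB] at hp
      rcases hp with rfl | rfl | rfl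
      exacts [Subgroup.subset_closure (by simp), Subgroup.subset_closure (by simp),
        e ▸ Subgroup.subset_closure (by simp)]
    · have ht : HasType m B (cMat 3) := h.hasType3 hB n1 n2 n3 (by decide) (by decide) h01 h02 h12
      have e := hsq hb hc (Or.inr (Or.inr (Or.inr (Or.inl ⟨ht, b, hb, c, hc, h12, rfl⟩))))
      refine hthree ha hb hc h01 h02 e ?_
      intro p hp
      rw [hB] at hp
      rcases hp with rfl | rfl | rfl
      exacts [Or.inl rfl, Or.inr (Or.inl rfl), Or.inr (Or.inr rfl)]
    · exact hab (Or.inr (Or.inr (Or.inl (h.hasType3 hB n1 n2 n3 (by decide) (by decide)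
        h01 h02 h12))))

end Lower

end CoxRep

/-! ### The dihedral radical lies in `N(W)` -/

namespace CoxRep

universe u

section LowerAll

variable {W : Type u} [Group W] {m : W → W → ℕ} {S : Set W}

lemma not_isCyclic_of_pair {K : Type*} [Group K] [Finite K] {a b : K} (ha : a * a = 1)
    (hb : b * b = 1) (ha1 : a ≠ 1) (hb1 : b ≠ 1) (hab : a ≠ b) : ¬ IsCyclic K := by
  classical
  intro hc
  have := Fintype.ofFinite K
  have h1 := IsCyclic.card_pow_eq_one_le (α := K) (n := 2) (by norm_num)
  have h2 : ({1, a, b} : Finset K) ⊆ Finset.univ.filter fun x : K => x ^ 2 = 1 := by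
    intro x hx
    simp only [Finset.mem_insert, Finset.mem_singleton] at hx
    simp only [Finset.mem_filter, Finset.mem_univ, true_and, pow_two]
    rcases hx with rfl | rfl | rfl
    exacts [one_mul 1, ha, hb]
  have h3 := Finset.card_le_card h2
  rw [Finset.card_eq_three.2 ⟨1, a, b, ha1.symm, hb1.symm, hab, rfl⟩] at h3
  omega

/-- Elements killed by the generalized dihedral quotients of a direct product have components with
the same property. -/
lemma inRad_prod {Y Z : Subgroup W} (hc : ∀ y ∈ Y, ∀ z ∈ Z, y * z = z * y)
    (hd : Disjoint Y Z) {x : W} (hx : InRad (Y ⊔ Z) x) :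
    ∃ y z, x = y * z ∧ InRad Y y ∧ InRad Z z := by
  have hcm : ∀ (y : Y) (z : Z), Commute (Y.subtype y) (Z.subtype z) :=
    fun y z => hc y y.2 z z.2
  set p : Y × Z →* W := Y.subtype.noncommCoprod Z.subtype hcm with hp
  have hrange : p.range = Y ⊔ Z := by
    rw [hp, MonoidHom.noncommCoprod_range, Subgroup.range_subtype, Subgroup.range_subtype]
  have hinj : Function.Injective p := by
    rw [hp, MonoidHom.noncommCoprod_injective]
    refine ⟨Subtype.val_injective, Subtype.val_injective, ?_⟩
    rwa [Subgroup.range_subtype, Subgroup.range_subtype]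
  rw [← hrange] at hx
  obtain ⟨hxm, hx⟩ := hx
  obtain ⟨⟨y, z⟩, rfl⟩ := id hxm
  set e := MonoidHom.ofInjective hinj with he
  have hsymm : ∀ h, e.symm ⟨p (y, z), h⟩ = (y, z) := fun h => e.symm_apply_apply (y, z)
  refine ⟨y, z, rfl, ⟨y.2, fun D _ hD φ => ?_⟩, ⟨z.2, fun D _ hD φ => ?_⟩⟩
  · have := hx D hD ((φ.comp (MonoidHom.fst Y Z)).comp e.symm.toMonoidHom)
    change φ (e.symm ⟨p (y, z), hxm⟩).1 = 1 at this
    rwa [hsymm] at this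
  · have := hx D hD ((φ.comp (MonoidHom.snd Y Z)).comp e.symm.toMonoidHom)
    change φ (e.symm ⟨p (y, z), hxm⟩).2 = 1 at this
    rwa [hsymm] at this

/-- Finite irreducible visual subgroups of rank at most two are generalized dihedral, so nothing
nontrivial is killed. -/
lemma eq_one_of_ncard_le_two {B : Set W} (hB : B.Finite) (hsq : ∀ s ∈ B, s * s = 1)
    (h2 : B.ncard ≤ 2) {x : W} (hx : InRad (Subgroup.closure B) x) : x = 1 := by
  obtain ⟨a, b, ha, hb, hab⟩ : ∃ a b : W, a * a = 1 ∧ b * b = 1 ∧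
      Subgroup.closure B = Subgroup.closure {a, b} := by
    obtain h0 | h1 | h2 : B.ncard = 0 ∨ B.ncard = 1 ∨ B.ncard = 2 := by omega
    · rw [Set.ncard_eq_zero hB] at h0
      refine ⟨1, 1, one_mul 1, one_mul 1, ?_⟩
      rw [h0, Set.pair_eq_singleton, Subgroup.closure_singleton_one, Subgroup.closure_empty]
    · obtain ⟨a, rfl⟩ := Set.ncard_eq_one.1 h1
      refine ⟨a, a, hsq a rfl, hsq a rfl, by rw [Set.pair_eq_singleton]⟩
    · obtain ⟨a, b, -, rfl⟩ := Set.ncard_eq_two.1 h2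
      exact ⟨a, b, hsq a (by simp), hsq b (by simp), rfl⟩
  rw [hab] at hx
  obtain ⟨hxK, hx⟩ := hx
  have haK : a ∈ Subgroup.closure {a, b} := Subgroup.subset_closure (by simp)
  have hbK : b ∈ Subgroup.closure {a, b} := Subgroup.subset_closure (by simp)
  have hgen : Subgroup.closure {(⟨a, haK⟩ : Subgroup.closure {a, b}), ⟨b, hbK⟩} = ⊤ := by
    rw [eq_top_iff, ← Subgroup.closure_closure_coe_preimage, Subgroup.closure_le]
    rintro ⟨y, hy⟩ (h | h)
    · obtain rfl : y = a := h
      exact Subgroup.subset_closure (by simp)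
    · obtain rfl : y = b := h
      exact Subgroup.subset_closure (by simp)
  have := hx _ (genDih_of_two (Subtype.ext ha) (Subtype.ext hb) hgen) (MonoidHom.id _)
  exact congrArg Subtype.val this

/-- Elements of a finite visual subgroup killed by all homomorphisms to generalized dihedral groups
lie in `N(W)`: a reducible subgroup is a direct product of smaller ones, and an irreducible one lies
in a maximal one, which is basic unless its rank is at most one. -/
lemma mem_NW_of_visual (hS : Sys m S) : ∀ (n : ℕ) (M : Set W), M ⊆ S → M.ncard = n →
    (Subgroup.closure M : Set W).Finite → ∀ x, InRad (Subgroup.closure M) x →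
      x ∈ NWSubgroup m S := by
  intro n
  induction n using Nat.strong_induction_on with
  | _ n ih =>
  intro M hMS hMn hMf x hx
  have hsq : ∀ s ∈ S, s * s = 1 := fun s hs => by
    have h1 : (s * s) ^ m s s = 1 := hS.rel s hs s hs
    rwa [hS.self s hs, pow_one] at h1
  by_cases hconn : Conn m M
  · obtain ⟨B, hMB, hBmax⟩ : ∃ B, M ≤ B ∧ Maximal (· ∈ {B : Set W | B ⊆ S ∧ Conn m B ∧
        (Subgroup.closure B : Set W).Finite}) B :=
      Set.Finite.exists_le_maximal (hS.fin.powerset.subset fun B hB => hB.1) ⟨hMS, hconn, hMf⟩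
    obtain ⟨hBS, hBc, hBf⟩ := hBmax.prop
    have hxB : InRad (Subgroup.closure B) x := hx.mono (Subgroup.closure_mono hMB)
    have hBfin : B.Finite := hS.fin.subset hBS
    by_cases h2 : B.ncard ≤ 2
    · rw [eq_one_of_ncard_le_two hBfin (fun s hs => hsq s (hBS hs)) h2 hxB]
      exact Subgroup.one_mem _
    · have hpos := hS.posDiag B hBS hBf
      obtain ⟨a, b, -, ha, hb, -, hab, -, -⟩ := (Set.two_lt_ncard_iff hBfin).1 (not_le.1 h2)
      have hbase : IsBase m S B := by
        refine ⟨hBS, isIrreducibleOn_of_conn hpos ⟨a, ha⟩ hBc, hBf, ?_, ?_⟩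
        · have : Finite (Subgroup.closure B) := hBf
          refine not_isCyclic_of_pair (a := ⟨a, Subgroup.subset_closure ha⟩)
            (b := ⟨b, Subgroup.subset_closure hb⟩) (Subtype.ext (hsq a (hBS ha)))
            (Subtype.ext (hsq b (hBS hb))) ?_ ?_ ?_
          · intro e
            have h1 : a = 1 := congrArg Subtype.val e
            exact hS.one_notMem (h1 ▸ hBS ha)
          · intro e
            have h1 : b = 1 := congrArg Subtype.val e
            exact hS.one_notMem (h1 ▸ hBS hb)
          · intro e
            exact hab (congrArg Subtype.val e)
        · intro B' hB'S hBB' hirr hfin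
          exact (hBmax.eq_of_subset ⟨hB'S, conn_of_isIrreducibleOn hirr, hfin⟩ hBB').symm
      exact Subgroup.subset_normalClosure ⟨B, hbase, not_le.1 h2,
        mem_NBSubgroup (hS.rel.mono hBS) hpos hBc (not_le.1 h2) hxB⟩
  · simp only [Conn, not_forall] at hconn
    obtain ⟨Y, hYM, hYne, hYneM, hno⟩ := hconn
    push Not at hno
    have hMfin : M.Finite := hS.fin.subset hMS
    have hcomm : ∀ y ∈ Subgroup.closure Y, ∀ z ∈ Subgroup.closure (M \ Y), y * z = z * y := by
      intro y hy z hz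
      have hyz : ∀ y ∈ Y, ∀ z ∈ M \ Y, y * z = z * y := by
        intro y hy z hz
        have h1 : m y z = 2 := by
          by_contra h1
          exact hno y hy z hz.1 hz.2 ⟨fun e => hz.2 (e ▸ hy), h1⟩
        exact (hS.rel.mono hMS).comm (hS.posDiag M hMS hMf) (hYM hy) hz.1 h1
      have h1 : Subgroup.closure Y ≤ Subgroup.centralizer (M \ Y) := by
        rw [Subgroup.closure_le]
        intro y hy
        exact Subgroup.mem_centralizer_iff.2 fun z hz => (hyz y hy z hz).symm
      have h2 : Subgroup.closure (M \ Y) ≤ Subgroup.centralizer (Subgroup.closure Y : Set W) := by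
        rw [Subgroup.closure_le]
        intro z hz
        exact Subgroup.mem_centralizer_iff.2 fun y hy =>
          (Subgroup.mem_centralizer_iff.1 (h1 hy) z hz).symm
      exact Subgroup.mem_centralizer_iff.1 (h2 hz) y hy
    have hdisj : Disjoint (Subgroup.closure Y) (Subgroup.closure (M \ Y)) := by
      rw [Subgroup.disjoint_def]
      intro w hw hw'
      exact hS.inter Y (hYM.trans hMS) _ (Set.sdiff_subset.trans hMS) Set.disjoint_sdiff_right
        w hw hw'
    rw [← Set.union_sdiff_cancel hYM, Subgroup.closure_union] at hx
    obtain ⟨y, z, rfl, hy, hz⟩ := inRad_prod hcomm hdisj hx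
    obtain ⟨v, hvM, hvY⟩ : ∃ v ∈ M, v ∉ Y := by
      by_contra! hcon
      exact hYneM (hYM.antisymm hcon)
    have hsubf : ∀ C ⊆ M, (Subgroup.closure C : Set W).Finite := fun C hC =>
      hMf.subset (Subgroup.closure_mono hC)
    refine Subgroup.mul_mem _ (ih _ ?_ Y (hYM.trans hMS) rfl (hsubf Y hYM) y hy)
      (ih _ ?_ (M \ Y) (Set.sdiff_subset.trans hMS) rfl (hsubf _ Set.sdiff_subset) z hz)
    · rw [← hMn]
      exact Set.ncard_lt_ncard (hYM.ssubset_of_ne hYneM) hMfin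
    · rw [← hMn]
      obtain ⟨y', hy'⟩ := hYne
      exact Set.ncard_lt_ncard ⟨Set.sdiff_subset, fun h => (h (hYM hy')).2 hy'⟩ hMfin

/-- The subgroup `N(W)` is determined by the group `W` alone. -/
theorem NW_eq_dihRad (hS : Sys m S) : NWSubgroup m S = dihRad W := by
  refine le_antisymm (NW_le_dihRad hS) ?_
  rw [dihRad]
  refine Subgroup.normalClosure_le_normal ?_
  rintro x ⟨F, hF, hx⟩
  obtain ⟨w, M, hMS, hMf, hw⟩ := hS.conj F hF
  have h1 := hx.map (MulAut.conj w⁻¹).toMonoidHom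
  have h2 : F.map (MulAut.conj w⁻¹).toMonoidHom ≤ Subgroup.closure M := by
    rintro _ ⟨f, hf, rfl⟩
    simpa [MulAut.conj_apply] using hw f hf
  have h3 := mem_NW_of_visual hS _ M hMS rfl hMf _ (h1.mono h2)
  have h4 := (inferInstance : (NWSubgroup m S).Normal).conj_mem _ h3 w
  simpa [MulAut.conj_apply, mul_assoc] using h4

end LowerAll

end CoxRep

/-! ### The quotient by `N(W)` -/

namespace CoxRep

section Quotient

variable {W : Type*} [Group W] {m : W → W → ℕ} {S : Set W}

/-- If the normal subgroup `N` is generated by the powers `(st)^k` it contains, then `W / N` is a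
Coxeter group: its relations are exactly the orders of the products of two generators. -/
theorem isCoxeterSystemOn_quotient (hcs : IsCoxeterSystemOn m S) (N : Subgroup W) [N.Normal]
    (hN : N ≤ Subgroup.normalClosure
      {x | x ∈ N ∧ ∃ s ∈ S, ∃ t ∈ S, ∃ k : ℕ, x = (s * t) ^ k}) :
    ∃ mq : W ⧸ N → W ⧸ N → ℕ, IsCoxeterSystemOn mq (QuotientGroup.mk' N '' S) := by
  obtain ⟨M, cs, hs, hm⟩ := hcs
  set Sq := QuotientGroup.mk' N '' S with hSq
  have hsq : ∀ a ∈ Sq, a * a = 1 := by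
    rintro _ ⟨s, hsS, rfl⟩
    have := cs.simple_mul_simple_self ⟨s, hsS⟩
    rw [hs] at this
    rw [← map_mul, this, map_one]
  have hinv : ∀ a ∈ Sq, a⁻¹ = a := fun a ha => mul_eq_one_iff_inv_eq.1 (hsq a ha)
  let Mq : CoxeterMatrix Sq :=
    { M := fun a b => orderOf ((a : W ⧸ N) * b)
      isSymm := by
        ext a b
        show orderOf ((b : W ⧸ N) * a) = orderOf ((a : W ⧸ N) * b)
        rw [← orderOf_inv, mul_inv_rev, hinv a a.2, hinv b b.2]
      diagonal := fun a => by rw [hsq a a.2, orderOf_one]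
      off_diagonal := fun a b hab h => hab <| Subtype.ext <| by
        rw [orderOf_eq_one_iff] at h
        rw [← hinv a a.2]
        exact mul_eq_one_iff_inv_eq.1 h }
  let csq := Mq.toCoxeterSystem
  -- the comparison of the group presented by the orders with the quotient, in both directions
  let f : Mq.Group →* W ⧸ N := csq.lift ⟨fun a => (a : W ⧸ N), fun a b => pow_orderOf_eq_one _⟩
  let η : S → Sq := fun s => ⟨QuotientGroup.mk' N s, s, s.2, rfl⟩
  have hpow : ∀ (s t : S) (k : ℕ), ((s : W) * t) ^ k ∈ N →
      (csq.simple (η s) * csq.simple (η t)) ^ k = 1 := by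
    intro s t k hk
    have h1 : ((η s : W ⧸ N) * η t) ^ k = 1 := by
      have : QuotientGroup.mk' N (((s : W) * t) ^ k) = 1 :=
        (QuotientGroup.eq_one_iff (N := N) _).2 hk
      rwa [map_pow, map_mul] at this
    obtain ⟨c, rfl⟩ := orderOf_dvd_of_pow_eq_one h1
    rw [pow_mul]
    have := csq.simple_mul_simple_pow (η s) (η t)
    rw [show Mq.M (η s) (η t) = orderOf ((η s : W ⧸ N) * η t) from rfl] at this
    rw [this, one_pow]
  have hlift : M.IsLiftable fun s => csq.simple (η s) := by
    intro s t
    apply hpow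
    have := cs.simple_mul_simple_pow s t
    rw [hs, hs] at this
    rw [this]
    exact N.one_mem
  let g₀ : W →* Mq.Group := cs.lift ⟨fun s => csq.simple (η s), hlift⟩
  have hg₀ : ∀ s : S, g₀ s = csq.simple (η s) := fun s => by
    rw [← hs s]; exact cs.lift_apply_simple hlift s
  have hker : N ≤ g₀.ker := by
    refine hN.trans (Subgroup.normalClosure_le_normal ?_)
    rintro _ ⟨hxN, s, hsS, t, htS, k, rfl⟩
    have := hpow ⟨s, hsS⟩ ⟨t, htS⟩ k hxN
    rw [SetLike.mem_coe, MonoidHom.mem_ker, map_pow, map_mul]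
    rwa [← hg₀, ← hg₀] at this
  let g : W ⧸ N →* Mq.Group := QuotientGroup.lift N g₀ hker
  have hf : ∀ a : Sq, f (csq.simple a) = a := fun a => csq.lift_apply_simple _ a
  have hg : ∀ a : Sq, g a = csq.simple a := by
    rintro ⟨_, s, hsS, rfl⟩
    exact hg₀ ⟨s, hsS⟩
  have hgf : g.comp f = MonoidHom.id _ := by
    apply csq.ext_simple
    intro a
    show g (f (csq.simple a)) = csq.simple a
    rw [hf, hg]
  have hfg : f.comp g = MonoidHom.id _ := by
    refine QuotientGroup.monoidHom_ext _ (cs.ext_simple fun s => ?_)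
    show f (g₀ (cs.simple s)) = QuotientGroup.mk' N (cs.simple s)
    rw [hs, hg₀, hf]
  let e : W ⧸ N ≃* Mq.Group := MonoidHom.toMulEquiv g f hfg hgf
  refine ⟨fun a b => orderOf (a * b), Mq, ⟨e⟩, fun a => ?_, fun a b => rfl⟩
  exact hf a

variable (S) in
/-- The elements `(st)^k` of the normal subgroup `N`. -/
def powSet (N : Subgroup W) : Set W := {x | x ∈ N ∧ ∃ s ∈ S, ∃ t ∈ S, ∃ k : ℕ, x = (s * t) ^ k}

/-- A commutator subgroup is the normal closure of the commutators of generators; for involutions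
`s` and `t` these are the squares `(st)^2`. -/
lemma commutator_le {B : Set W} (hsq : ∀ s ∈ B, s * s = 1) (K : Subgroup W) [K.Normal]
    (hK : ∀ s ∈ B, ∀ t ∈ B, (s * t) ^ 2 ∈ K) :
    (⁅Subgroup.closure B, Subgroup.closure B⁆ : Subgroup W) ≤ K := by
  have hc : ∀ x ∈ Subgroup.closure ((QuotientGroup.mk' K) '' B),
      ∀ y ∈ Subgroup.closure ((QuotientGroup.mk' K) '' B), x * y = y * x := by
    have h0 : ∀ s ∈ (QuotientGroup.mk' K) '' B, ∀ t ∈ (QuotientGroup.mk' K) '' B,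
        s * t = t * s := by
      rintro _ ⟨s, hs, rfl⟩ _ ⟨t, ht, rfl⟩
      have h1 : QuotientGroup.mk' K ((s * t) ^ 2) = 1 :=
        (QuotientGroup.eq_one_iff (N := K) _).2 (hK s hs t ht)
      rw [← map_mul, ← map_mul]
      have h2 : t * s = (s * t)⁻¹ := by
        rw [mul_inv_rev, mul_eq_one_iff_inv_eq.1 (hsq s hs),
          mul_eq_one_iff_inv_eq.1 (hsq t ht)]
      rw [h2, map_inv, eq_inv_iff_mul_eq_one, ← map_mul, ← pow_two, h1]
    intro x hx y hy
    have h1 : Subgroup.closure ((QuotientGroup.mk' K) '' B) ≤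
        Subgroup.centralizer ((QuotientGroup.mk' K) '' B) := by
      rw [Subgroup.closure_le]
      exact fun s hs => Subgroup.mem_centralizer_iff.2 fun t ht => h0 t ht s hs
    have h2 : Subgroup.closure ((QuotientGroup.mk' K) '' B) ≤
        Subgroup.centralizer (Subgroup.closure ((QuotientGroup.mk' K) '' B) : Set (W ⧸ K)) := by
      rw [Subgroup.closure_le]
      exact fun s hs => Subgroup.mem_centralizer_iff.2 fun t ht =>
        (Subgroup.mem_centralizer_iff.1 (h1 ht) s hs).symm
    exact (Subgroup.mem_centralizer_iff.1 (h2 hx) y hy).symm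
  rw [Subgroup.commutator_le]
  intro x hx y hy
  rw [← QuotientGroup.eq_one_iff, commutatorElement_def]
  have hmem : ∀ x ∈ Subgroup.closure B,
      QuotientGroup.mk' K x ∈ Subgroup.closure ((QuotientGroup.mk' K) '' B) := fun x hx => by
    rw [← MonoidHom.map_closure]; exact Subgroup.mem_map_of_mem _ hx
  have h1 := hc _ (hmem x hx) _ (hmem y hy)
  show QuotientGroup.mk' K (x * y * x⁻¹ * y⁻¹) = 1
  rw [map_mul, map_mul, map_mul, h1, map_inv, map_inv]
  group

/-- The subgroup `N(W)` is generated as a normal subgroup by powers of products of two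
generators. -/
lemma NW_le_normalClosure (hsq : ∀ s ∈ S, s * s = 1) :
    NWSubgroup m S ≤ Subgroup.normalClosure (powSet S (NWSubgroup m S)) := by
  refine Subgroup.normalClosure_le_normal ?_
  rintro x ⟨B, hB, h3, hx⟩
  have hBS : B ⊆ S := hB.1
  -- `N(⟨B⟩)` lies in `N(W)`, and it is the normal closure of powers of products of generators
  have hNB : ∀ y ∈ Subgroup.closure B, y ∈ genSetNB m B → y ∈ NWSubgroup m S := fun y hy hyg =>
    Subgroup.subset_normalClosure ⟨B, hB, h3,
      Subgroup.mem_map_of_mem _ (Subgroup.subset_normalClosure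
        (show (⟨y, hy⟩ : Subgroup.closure B) ∈ _ from hyg))⟩
  have hcl : ∀ s ∈ B, s ∈ Subgroup.closure B := fun s hs => Subgroup.subset_closure hs
  have hpow : ∀ s ∈ B, ∀ t ∈ B, ∀ k : ℕ, (s * t) ^ k ∈ genSetNB m B →
      (s * t) ^ k ∈ Subgroup.normalClosure (powSet S (NWSubgroup m S)) := fun s hs t ht k hg =>
    Subgroup.subset_normalClosure ⟨hNB _ (pow_mem (mul_mem (hcl s hs) (hcl t ht)) k) hg,
      s, hBS hs, t, hBS ht, k, rfl⟩
  obtain ⟨y, hy, rfl⟩ := hx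
  suffices h : Subgroup.normalClosure ((fun x : Subgroup.closure B => (x : W)) ⁻¹' genSetNB m B) ≤
      (Subgroup.normalClosure (powSet S (NWSubgroup m S))).comap
        (Subgroup.closure B).subtype from h hy
  refine Subgroup.normalClosure_le_normal ?_
  rintro ⟨y, hyB⟩ hyg
  show y ∈ Subgroup.normalClosure (powSet S (NWSubgroup m S))
  have hyg' : y ∈ genSetNB m B := hyg
  rcases hyg with ⟨hty, hyc⟩ | ⟨-, u, hu, v, hv, -, -, e⟩ | ⟨-, u, hu, v, hv, -, -, e⟩ |
    ⟨-, u, hu, v, hv, -, e⟩ | ⟨-, u, hu, p, -, v, hv, q, -, -, -, -, -, e⟩ |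
    ⟨-, u, hu, v, hv, -, e⟩
  · refine commutator_le (fun s hs => hsq s (hBS hs)) _ (fun s hs t ht => ?_) hyc
    refine hpow s hs t ht 2 (Or.inl ⟨hty, ?_⟩)
    have h1 : (s * t) ^ 2 = s * t * s⁻¹ * t⁻¹ := by
      rw [mul_eq_one_iff_inv_eq.1 (hsq s (hBS hs)), mul_eq_one_iff_inv_eq.1 (hsq t (hBS ht)),
        pow_two, mul_assoc (s * t)]
    rw [h1]
    exact Subgroup.commutator_mem_commutator (hcl s hs) (hcl t ht)
  all_goals change y = _ at e
  · rw [e, ← pow_one (u * v)] at hyg' ⊢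
    exact hpow u hu v hv 1 hyg'
  · rw [e, ← pow_one (u * v)] at hyg' ⊢
    exact hpow u hu v hv 1 hyg'
  · rw [e] at hyg' ⊢
    exact hpow u hu v hv 2 hyg'
  · rw [e, ← pow_one (u * v)] at hyg' ⊢
    exact hpow u hu v hv 1 hyg'
  · rw [e] at hyg' ⊢
    exact hpow u hu v hv 2 hyg'

end Quotient

end CoxRep

/-- The quotient of `W` by `N(W)` with the images of `S` is a Coxeter
system, and `N(W)` does not depend on the choice of Coxeter generators and is a
characteristic subgroup of `W`. -/
theorem NW_characteristic (m : W → W → ℕ) (S : Set W)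
    (hcs : IsCoxeterSystemOn m S) (hfin : S.Finite) :
    (∃ mq : W ⧸ NWSubgroup m S → W ⧸ NWSubgroup m S → ℕ,
        IsCoxeterSystemOn mq (QuotientGroup.mk' (NWSubgroup m S) '' S)) ∧
    (∀ (S' : Set W) (m' : W → W → ℕ), IsCoxeterSystemOn m' S' → S'.Finite →
        NWSubgroup m' S' = NWSubgroup m S) ∧
    (∀ φ : W ≃* W, Subgroup.map φ.toMonoidHom (NWSubgroup m S) = NWSubgroup m S) := by
  have hS := CoxRep.sys_of_isCoxeterSystemOn hcs hfin
  have hNW := CoxRep.NW_eq_dihRad hS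
  refine ⟨?_, fun S' m' hcs' hfin' => ?_, fun φ => ?_⟩
  · refine CoxRep.isCoxeterSystemOn_quotient hcs _ (CoxRep.NW_le_normalClosure fun s hs => ?_)
    have h1 : (s * s) ^ m s s = 1 := hS.rel s hs s hs
    rwa [hS.self s hs, pow_one] at h1
  · rw [CoxRep.NW_eq_dihRad (CoxRep.sys_of_isCoxeterSystemOn hcs' hfin'), hNW]
  · rw [hNW, CoxRep.dihRad_map]
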